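/- arXiv:math/0307161 — 3 statements merged into one kernel-verified Lean document; each statement's English description precedes it below -/
import Mathlib

section
/- Let (R,m) be a complete Noetherian local integral domain of Krull dimension d containing a field of characteristic p > 0, and let R^+ be its absolute integral closure. Then R^+ is a big Cohen–Macaulay R-algebra: every system of parameters x_1,…,x_d of R is a regular sequence on R^+, i.e., (x_1,…,x_d)R^+ ≠ R^+ and for each k the element x_k is a nonzerodivisor on R^+/(x_1,…,x_{k−1})R^+. -/
/-!
The idea is to prove more: a complete local domain `R` of characteristic `p` is an integral extension
of a power series ring `A`, and the integral closure of `A` in an algebraically closed field is flat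
over `A`.

*Reduction to power series.* Fields of characteristic `p` lift along square-zero surjections
(`exists_lift_of_sq_zero`: start from the canonical lift on `p`-th powers and adjoin `p`-th roots by
Zorn's lemma), so `R` has a coefficient field `K` (`exists_coefficient_field`). Given a system of
parameters `x_1, …, x_d`, the map `A = K[[X_1, …, X_d]] → R` with `X_i ↦ x_i` is finite, and it is
injective because `R` has dimension `d` (`exists_finite_injective`). Hence `R⁺` is also the integral
closure `T` of `A` in the algebraic closure of the fraction field of `R`. If `T` is flat over `A`, the
regular sequence `X_1, …, X_d` stays regular on `T` (`mem_of_mul_mem_span_of_flat`); properness of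
`(x_1, …, x_d) R⁺` is lying over.

*Flatness* (`flat_integralClosure`) holds over every Noetherian local domain `A` of characteristic `p`
and finite global dimension, by induction on the dimension.

* Flatness at the nonmaximal primes gives, for each finitely generated `N ≤ T`, a power of the maximal
  ideal `m` consisting of `c` such that `c : N → T` factors through a finite free module
  (`exists_freeMult_of_flat_localization`, `exists_pow_freeMult`).
* Take a sequence `x` regular on `A`. A relation `x_i w ∈ (x_l : l ∈ I) T` and all its Frobenius powers
  are then killed by one fixed `m ^ a`, modulo `x_l ^ (p ^ e)` respectively. This forces
  `w ^ (p ^ e)` to be, modulo `x_l ^ (p ^ e)`, a multiple by `∏ x_l ^ (p ^ e - M₀)` of an element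
  `β_e` of a finitely generated module independent of `e` (`uniform_decomposition`). A linear
  dependence among the `β_e` is an additive monic equation for `w` modulo `(x_l ^ Q)`; solving such
  equations in the absolutely integrally closed `T` gives `w ∈ (x_l) T` (`mem_parSum_of_smul_mem`).
  So `x` is regular on `T` (`powReg_of_freeMult`).
* Let `T^*` be the character module, so that `Ext(M, T^*)` is dual to `Tor(M, T)`. For a maximal
  regular sequence `x` of `A`, the residue field embeds in `A / (x)`, whose positive `Ext` into `T^*`
  vanish. As `Tor_1(-, T)` is `m`-power torsion, a nonzero `Ext(M, T^*)` is not divisible by elements of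
  `m`, and descending induction on the degree, starting from the finite global dimension, shows that
  all positive `Ext(M, T^*)` vanish; thus `T^*` is injective and `T` is flat (`flat_of_torTorsion`).

Power series rings over a field have finite global dimension by the syzygy theorem
(`hasProjectiveDimensionLT_of_regular`).
-/

/-! ### Submodules generated by powers of parameters, and free multipliers -/

namespace BigCM

section ParSum

variable {A : Type} [CommRing A] {ι : Type}
variable {M' : Type} [AddCommGroup M'] [Module A M']
variable {M : Type} [AddCommGroup M] [Module A M]

/-- The submodule `∑_{l ∈ I} x_l ^ b_l N` of `M`. -/
def parSum (x : ι → A) (N : Submodule A M) (I : Finset ι) (b : ι → ℕ) : Submodule A M where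
  carrier := {w | ∃ u : ι → M, (∀ l, u l ∈ N) ∧ w = ∑ l ∈ I, x l ^ b l • u l}
  add_mem' := by
    rintro _ _ ⟨u, hu, rfl⟩ ⟨v, hv, rfl⟩
    exact ⟨u + v, fun l => N.add_mem (hu l) (hv l), by simp [Finset.sum_add_distrib]⟩
  zero_mem' := ⟨0, fun l => N.zero_mem, by simp⟩
  smul_mem' := by
    rintro c _ ⟨u, hu, rfl⟩
    refine ⟨c • u, fun l => N.smul_mem c (hu l), ?_⟩
    simp only [Finset.smul_sum, Pi.smul_apply]
    exact Finset.sum_congr rfl fun l _ => smul_comm _ _ _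

variable {x : ι → A}

lemma mem_parSum {N : Submodule A M} {I : Finset ι} {b : ι → ℕ} {w : M} :
    w ∈ parSum x N I b ↔ ∃ u : ι → M, (∀ l, u l ∈ N) ∧ w = ∑ l ∈ I, x l ^ b l • u l := Iff.rfl

lemma parSum_mono {N N' : Submodule A M} (h : N ≤ N') (I : Finset ι) (b : ι → ℕ) :
    parSum x N I b ≤ parSum x N' I b := by
  rintro _ ⟨u, hu, rfl⟩
  exact ⟨u, fun l => h (hu l), rfl⟩

lemma parSum_congr {N : Submodule A M} {I : Finset ι} {b b' : ι → ℕ} (h : ∀ l ∈ I, b l = b' l) :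
    parSum x N I b = parSum x N I b' := by
  ext w
  simp only [mem_parSum]
  refine exists_congr fun u => and_congr_right fun _ => ?_
  rw [Finset.sum_congr rfl fun l hl => by rw [h l hl]]

lemma mem_parSum_insert [DecidableEq ι] {N : Submodule A M} {I : Finset ι} {b : ι → ℕ} {i : ι}
    (hi : i ∉ I) {w : M} : w ∈ parSum x N (insert i I) b ↔
      ∃ e ∈ parSum x N I b, ∃ u ∈ N, w = e + x i ^ b i • u := by
  constructor
  · rintro ⟨u, hu, rfl⟩
    refine ⟨_, ⟨u, hu, rfl⟩, u i, hu i, ?_⟩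
    rw [Finset.sum_insert hi, add_comm]
  · rintro ⟨_, ⟨u, hu, rfl⟩, v, hv, rfl⟩
    refine ⟨Function.update u i v, fun l => ?_, ?_⟩
    · by_cases h : l = i
      · subst h; simpa using hv
      · simpa [h] using hu l
    · rw [Finset.sum_insert hi, add_comm]
      congr 1
      · simp
      · refine Finset.sum_congr rfl fun l hl => ?_
        rw [Function.update_of_ne (by rintro rfl; exact hi hl)]

lemma parSum_subset [DecidableEq ι] {N : Submodule A M} {I K : Finset ι} {b : ι → ℕ} (h : I ⊆ K) :
    parSum x N I b ≤ parSum x N K b := by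
  rintro _ ⟨u, hu, rfl⟩
  refine ⟨fun l => if l ∈ I then u l else 0, fun l => ?_, ?_⟩
  · dsimp only; split_ifs
    exacts [hu l, N.zero_mem]
  · rw [← Finset.sum_subset h]
    · exact Finset.sum_congr rfl fun l hl => by simp [hl]
    · intro l _ hl; simp [hl]

lemma parSum_map {N : Submodule A M} {N' : Submodule A M'} (f : M →ₗ[A] M')
    (hf : ∀ w ∈ N, f w ∈ N') {I : Finset ι} {b : ι → ℕ} {w : M} (hw : w ∈ parSum x N I b) :
    f w ∈ parSum x N' I b := by
  obtain ⟨u, hu, rfl⟩ := hw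
  exact ⟨fun l => f (u l), fun l => hf _ (hu l), by simp⟩

variable (x) in
/-- Every `x_i` is a nonzerodivisor on `M / (x_l ^ b_l : l ∈ I) M` whenever `i ∉ I`, for
all exponents `b`. This is regularity of the family `x` in every order and with all powers. -/
def PowReg (M : Type) [AddCommGroup M] [Module A M] : Prop :=
  ∀ (I : Finset ι) (i : ι), i ∉ I → ∀ (b : ι → ℕ) (w : M),
    x i • w ∈ parSum x (⊤ : Submodule A M) I b → w ∈ parSum x (⊤ : Submodule A M) I b

lemma of_pow_smul_mem {I : Finset ι} {i : ι} {b : ι → ℕ}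
    (h : ∀ w : M, x i • w ∈ parSum x (⊤ : Submodule A M) I b → w ∈ parSum x (⊤ : Submodule A M) I b)
    (e : ℕ) (w : M) (hw : x i ^ e • w ∈ parSum x (⊤ : Submodule A M) I b) :
    w ∈ parSum x (⊤ : Submodule A M) I b := by
  induction e with
  | zero => simpa using hw
  | succ e ih =>
    apply ih
    apply h
    rwa [smul_smul, ← pow_succ']

lemma PowReg.pi (h : PowReg x A) (n : ℕ) : PowReg x (Fin n → A) := by
  intro I i hi b w hw
  have key : ∀ j, w j ∈ parSum x (⊤ : Submodule A A) I b := fun j =>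
    h I i hi b (w j) (parSum_map (LinearMap.proj j : (Fin n → A) →ₗ[A] A) (by simp) hw)
  choose u _ hu using key
  refine ⟨fun l j => u j l, by simp, ?_⟩
  ext j
  rw [hu j]
  simp

end ParSum

section Uniform

variable {A : Type} [CommRing A] {ι : Type}
variable {M : Type} [AddCommGroup M] [Module A M]

/-- The element `c` of `A` is a *free multiplier* for `N ≤ M` if multiplication by `c`, as a map
`N → M`, factors through a finite free module. -/
def FreeMult (N : Submodule A M) (c : A) : Prop :=
  ∃ (n : ℕ) (φ : N →ₗ[A] (Fin n → A)) (ψ : (Fin n → A) →ₗ[A] M), ∀ w : N, ψ (φ w) = c • (w : M)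

/-- If `m ^ a` consists of free multipliers for `N`, then parameter relations in `N` become trivial
in some finitely generated `S` after multiplication by any element of `m ^ a`, and `S`
depends neither on the relation nor on the exponents. -/
lemma exists_uniform [IsNoetherianRing A] {x : ι → A} (hx : PowReg x A) {m : Ideal A} {N : Submodule A M}
    (hJ : ∃ a, ∀ c ∈ m ^ a, FreeMult N c) :
    ∃ (a : ℕ) (S : Submodule A M), S.FG ∧ ∀ c ∈ m ^ a, ∀ (I : Finset ι) (i : ι), i ∉ I →
      ∀ (e : ℕ) (b : ι → ℕ), ∀ w ∈ N, x i ^ e • w ∈ parSum x N I b → c • w ∈ parSum x S I b := by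
  obtain ⟨a, ha⟩ := hJ
  obtain ⟨G, hG⟩ := (IsNoetherian.noetherian (m ^ a) : (m ^ a).FG)
  have hG' : ∀ c : G, FreeMult N (c : A) := fun c => ha c (hG ▸ Ideal.subset_span c.2)
  choose n φ ψ h using hG'
  refine ⟨a, ⨆ c : G, LinearMap.range (ψ c), ?_, ?_⟩
  · exact Submodule.fg_iSup _ fun c => (Module.Finite.range (ψ c)).fg_top |> fun _ =>
      Module.Finite.iff_fg.mp inferInstance
  · intro c hc I i hi e b w hw hrel
    rw [← hG] at hc
    induction hc using Submodule.span_induction with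
    | zero => simp
    | add c c' _ _ h1 h2 => rw [add_smul]; exact add_mem h1 h2
    | smul r c _ h1 => rw [smul_assoc]; exact Submodule.smul_mem _ _ h1
    | mem c hc =>
      obtain ⟨u, hu, hrel⟩ := hrel
      have h1 : x i ^ e • φ ⟨c, hc⟩ ⟨w, hw⟩ ∈
          parSum x (⊤ : Submodule A (Fin (n ⟨c, hc⟩) → A)) I b := by
        refine ⟨fun l => φ ⟨c, hc⟩ ⟨u l, hu l⟩, by simp, ?_⟩
        rw [← map_smul]
        simp_rw [← map_smul]
        rw [← map_sum]
        congr 1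
        ext
        simpa using hrel
      have h2 := of_pow_smul_mem (hx.pi _ I i hi b) e _ h1
      have h3 := parSum_map (N' := ⨆ c : G, LinearMap.range (ψ c)) (ψ ⟨c, hc⟩)
        (fun v _ => Submodule.mem_iSup_of_mem ⟨c, hc⟩ ⟨v, rfl⟩) h2
      rwa [h] at h3

/-- The exponents equal to `n` on `Q` and to `f` elsewhere. -/
def mix [DecidableEq ι] (Q : Finset ι) (n : ℕ) (f : ι → ℕ) : ι → ℕ := fun l => if l ∈ Q then n else f l

lemma smul_mem_mul_pow {m : Ideal A} {a b : ℕ} {K : Submodule A M} {u : M}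
    (h : ∀ c ∈ m ^ a, ∀ c' ∈ m ^ b, (c' * c) • u ∈ K) : ∀ c ∈ m ^ (a + b), c • u ∈ K := by
  intro c hc
  rw [pow_add] at hc
  induction hc using Submodule.mul_induction_on' with
  | mem_mul_mem c hc c' hc' => rw [mul_comm]; exact h c hc c' hc'
  | add c _ c' _ h1 h2 => rw [add_smul]; exact add_mem h1 h2

/-- The exponents on `P` are fixed, those on `Q` equal a varying `n`. If `m ^ a w` lies in
`∑_{l ∈ P ∪ Q} x_l ^ b_l N`, then `w` itself lies in `∑_{l ∈ P ∪ Q} x_l ^ b_l S`, up to a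
multiple of `∏_{l ∈ Q} x_l ^ (n - M₀)` that occurs only if `P ∪ Q = I`. The point is that `S` and
`M₀` do not depend on `n`. -/
lemma uniform_decomposition [IsNoetherianRing A] [DecidableEq ι] {x : ι → A} (hx : PowReg x A) {m : Ideal A} (hxm : ∀ i, x i ∈ m)
    (hJ : ∀ N : Submodule A M, N.FG → ∃ a, ∀ c ∈ m ^ a, FreeMult N c) (I : Finset ι)
    (hI : ∀ P ⊆ I, ∀ j ∈ I, j ∉ P → ∀ (b : ι → ℕ) (w : M),
      x j • w ∈ parSum x (⊤ : Submodule A M) P b → w ∈ parSum x (⊤ : Submodule A M) P b)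
    (Q : Finset ι) : ∀ (P : Finset ι), Disjoint P Q → P ∪ Q ⊆ I → ∀ (f : ι → ℕ)
      (N : Submodule A M), N.FG → ∀ a : ℕ, ∃ (S : Submodule A M) (M₀ : ℕ), S.FG ∧ ∀ n ≥ M₀,
        ∀ w ∈ N, (∀ c ∈ m ^ a, c • w ∈ parSum x N (P ∪ Q) (mix Q n f)) →
          ∃ e ∈ parSum x S (P ∪ Q) (mix Q n f), ∃ s ∈ S,
            w = e + (∏ l ∈ Q, x l ^ (n - M₀)) • s ∧ (P ∪ Q ≠ I → s = 0) := by
  induction Q using Finset.induction_on with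
  | empty =>
    intro P _ hPI f N hN a
    rw [Finset.union_empty] at *
    by_cases hP : P = I
    · exact ⟨N, 0, hN, fun n _ w hw _ => ⟨0, zero_mem _, w, hw, by simp, fun h => absurd hP h⟩⟩
    · obtain ⟨j, hjI, hjP⟩ := Finset.exists_of_ssubset (hPI.ssubset_of_ne hP)
      have hmix : ∀ n, mix ∅ n f = f := fun n => by ext l; simp [mix]
      simp only [hmix]
      have : IsNoetherian A N := isNoetherian_of_fg_of_noetherian N hN
      -- the submodule of elements of `N` that lie in the fixed submodule `∑ x_l ^ f_l M`
      obtain ⟨G, hG⟩ : (N ⊓ parSum x ⊤ P f).FG :=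
        Submodule.FG.of_le hN inf_le_left
      have hG' : ∀ g : G, (g : M) ∈ parSum x (⊤ : Submodule A M) P f := fun g =>
        (hG ▸ Submodule.subset_span g.2 : (g : M) ∈ N ⊓ parSum x ⊤ P f).2
      choose u _ hu using hG'
      refine ⟨⨆ g : G, ⨆ l : P, Submodule.span A {u g l}, 0, ?_, ?_⟩
      · exact Submodule.fg_iSup _ fun g => Submodule.fg_iSup _ fun l =>
          Submodule.fg_span_singleton _
      · intro n _ w hw hc
        have hw' : w ∈ parSum x (⊤ : Submodule A M) P f := by
          refine of_pow_smul_mem (hI P hPI j hjI hjP f) a w ?_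
          exact parSum_mono le_top _ _ (hc _ (Ideal.pow_mem_pow (hxm j) a))
        have hw2 : w ∈ Submodule.span A (G : Set M) := by rw [hG]; exact ⟨hw, hw'⟩
        refine ⟨w, ?_, 0, zero_mem _, by simp, fun _ => rfl⟩
        refine (Submodule.span_le.mpr ?_) hw2
        intro g hg
        refine ⟨fun l => if l ∈ P then u ⟨g, hg⟩ l else 0, fun l => ?_, ?_⟩
        · dsimp only; split_ifs with hl
          · exact Submodule.mem_iSup_of_mem ⟨g, hg⟩ (Submodule.mem_iSup_of_mem ⟨l, hl⟩
              (Submodule.mem_span_singleton_self _))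
          · exact zero_mem _
        · exact (hu ⟨g, hg⟩).trans (Finset.sum_congr rfl fun l hl => by simp [hl])
  | insert i Q hiQ ih =>
    intro P hPQ hPI f N hN a
    have hiP : i ∉ P := fun h => (Finset.disjoint_left.mp hPQ h) (Finset.mem_insert_self _ _)
    have hiPQ : i ∉ P ∪ Q := by simp [hiP, hiQ]
    have hU : P ∪ insert i Q = insert i (P ∪ Q) := Finset.union_insert _ _ _
    have hU' : insert i P ∪ Q = insert i (P ∪ Q) := Finset.insert_union _ _ _
    have hdisj : Disjoint P Q := hPQ.mono_right (Finset.subset_insert _ _)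
    have hdisj' : Disjoint (insert i P) Q := by
      rw [Finset.disjoint_insert_left]; exact ⟨hiQ, hdisj⟩
    rw [hU] at hPI ⊢
    have hPQI : P ∪ Q ⊆ I := (Finset.subset_insert _ _).trans hPI
    have hne : P ∪ Q ≠ I := fun h => hiPQ (h ▸ hPI (Finset.mem_insert_self _ _))
    obtain ⟨a₁, S₁, hS₁, h₁⟩ := exists_uniform hx (hJ N hN)
    obtain ⟨S₂, M₂, hS₂, h₂⟩ := ih P hdisj hPQI f (N ⊔ S₁) (hN.sup hS₁) a₁
    obtain ⟨a₃, S₃, hS₃, h₃⟩ := exists_uniform hx (hJ (N ⊔ S₂) (hN.sup hS₂))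
    obtain ⟨S₅, M₅, hS₅, h₅⟩ := ih (insert i P) hdisj' (hU' ▸ hPI) (Function.update f i a)
      (N ⊔ S₂ ⊔ S₃) ((hN.sup hS₂).sup hS₃) (a + a₃)
    rw [hU'] at h₅
    refine ⟨S₂ ⊔ S₅, max a (max M₂ M₅), hS₂.sup hS₅, ?_⟩
    intro n hn w hw hc
    have hna : a ≤ n := (le_max_left _ _).trans hn
    have hn2 : M₂ ≤ n := (le_max_left _ _).trans ((le_max_right _ _).trans hn)
    have hn5 : M₅ ≤ n := (le_max_right _ _).trans ((le_max_right _ _).trans hn)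
    have hmixi : mix (insert i Q) n f i = n := by simp [mix]
    have hmix : ∀ K : Submodule A M, parSum x K (P ∪ Q) (mix (insert i Q) n f) =
        parSum x K (P ∪ Q) (mix Q n f) := fun K => parSum_congr fun l hl => by
      have : l ≠ i := fun h => hiPQ (h ▸ hl)
      simp [mix, this]
    have hmix' : ∀ K : Submodule A M, parSum x K (P ∪ Q) (mix Q n (Function.update f i a)) =
        parSum x K (P ∪ Q) (mix Q n f) := fun K => parSum_congr fun l hl => by
      have : l ≠ i := fun h => hiPQ (h ▸ hl)
      simp [mix, this]
    have hmixi' : mix Q n (Function.update f i a) i = a := by simp [mix, hiQ]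
    have hpow : x i ^ n = x i ^ (n - a) * x i ^ a := by rw [← pow_add, Nat.sub_add_cancel hna]
    have hcs := hc
    -- split off the component along `x_i`: `w = w' + x_i ^ (n - a) u`
    obtain ⟨e, he, u, hu, heq⟩ := (mem_parSum_insert hiPQ).mp
      (hc _ (Ideal.pow_mem_pow (hxm i) a))
    rw [hmix] at he
    rw [hmixi] at heq
    set w' := w - x i ^ (n - a) • u with hw'
    have hw'N : w' ∈ N := N.sub_mem hw (N.smul_mem _ hu)
    have hw'e : x i ^ a • w' = e := by
      rw [hw', smul_sub, heq, smul_smul, hpow, mul_comm (x i ^ a)]; abel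
    obtain ⟨e', he', s', _, hws', hs'⟩ := h₂ n hn2 w' (Submodule.mem_sup_left hw'N) fun c hc =>
      parSum_mono le_sup_right _ _ (h₁ c hc (P ∪ Q) i hiPQ a _ w' hw'N (hw'e ▸ he))
    have hw'2 : w' ∈ parSum x S₂ (P ∪ Q) (mix Q n f) := by
      rw [hws', hs' hne, smul_zero, add_zero]; exact he'
    -- the coefficient `u` satisfies a relation in which `x_i` has the fixed exponent `a`
    obtain ⟨e'', he'', s, hs, hus, hs0⟩ := h₅ n hn5 u
      (Submodule.mem_sup_left (Submodule.mem_sup_left hu)) (by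
        refine smul_mem_mul_pow fun c hc c' hc' => ?_
        obtain ⟨e₁, he₁, s₁, hs₁, heq₁⟩ := (mem_parSum_insert hiPQ).mp (hcs c hc)
        rw [hmix] at he₁
        rw [hmixi] at heq₁
        have hrel : x i ^ (n - a) • (c • u - x i ^ a • s₁) = e₁ - c • w' := by
          rw [hw', smul_sub c, heq₁, smul_sub, smul_smul, smul_smul, smul_smul, ← hpow,
            mul_comm c]; abel
        have h := h₃ c' hc' (P ∪ Q) i hiPQ (n - a) (mix Q n f) (c • u - x i ^ a • s₁)
          (sub_mem (Submodule.mem_sup_left (N.smul_mem _ hu))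
            (Submodule.mem_sup_left (N.smul_mem _ hs₁))) (by
            rw [hrel]
            exact sub_mem (parSum_mono le_sup_left _ _ he₁)
              (Submodule.smul_mem _ _ (parSum_mono le_sup_right _ _ hw'2)))
        refine (mem_parSum_insert hiPQ).mpr ⟨c' • (c • u - x i ^ a • s₁), ?_, c' • s₁,
          Submodule.mem_sup_left (Submodule.mem_sup_left (N.smul_mem _ hs₁)), ?_⟩
        · rw [hmix']; exact parSum_mono le_sup_right _ _ h
        · rw [hmixi', smul_sub, smul_smul, smul_comm (x i ^ a) c']; abel)
    obtain ⟨e₆, he₆, s₆, hs₆, heq₆⟩ := (mem_parSum_insert hiPQ).mp he''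
    rw [hmix'] at he₆
    rw [hmixi'] at heq₆
    refine ⟨w' + x i ^ (n - a) • e'', ?_, (∏ l ∈ insert i Q, x l ^ (max a (max M₂ M₅) -
      if l = i then a else M₅)) • s, Submodule.smul_mem _ _ (Submodule.mem_sup_right hs), ?_, ?_⟩
    · refine (mem_parSum_insert hiPQ).mpr ⟨w' + x i ^ (n - a) • e₆, ?_, s₆,
        Submodule.mem_sup_right hs₆, ?_⟩
      · rw [hmix]
        exact add_mem (parSum_mono le_sup_left _ _ hw'2)
          (Submodule.smul_mem _ _ (parSum_mono le_sup_right _ _ he₆))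
      · rw [heq₆, hmixi, hpow, mul_smul, smul_add]; abel
    · have hprod : (∏ l ∈ insert i Q, x l ^ (n - max a (max M₂ M₅))) *
          (∏ l ∈ insert i Q, x l ^ (max a (max M₂ M₅) - if l = i then a else M₅)) =
          x i ^ (n - a) * ∏ l ∈ Q, x l ^ (n - M₅) := by
        rw [← Finset.prod_mul_distrib, Finset.prod_insert hiQ]
        congr 1
        · rw [← pow_add, if_pos rfl]; congr 1; omega
        · refine Finset.prod_congr rfl fun l hl => ?_
          rw [← pow_add, if_neg (by rintro rfl; exact hiQ hl)]; congr 1; omega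
      rw [smul_smul, hprod, mul_smul, add_assoc, ← smul_add, ← hus, hw']; abel
    · intro h; rw [hs0 h, smul_zero]

end Uniform

end BigCM

namespace BigCM

/-! ### Absolutely integrally closed domains -/

/-- A form of being absolutely integrally closed, for a domain `T`: sparse monic equations have
roots in `T`, and an element `a / b` of the fraction field satisfying such an equation lies
in `T`. -/
structure AbsClosed (T : Type) [CommRing T] : Prop where
  root : ∀ (k Q : ℕ) (q : ℕ → ℕ) (c : ℕ → T) (t : T), Q ≠ 0 → (∀ j < k, q j < Q) →
    ∃ z : T, z ^ Q = ∑ j ∈ Finset.range k, c j * z ^ q j + t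
  dvd : ∀ (k Q : ℕ) (q : ℕ → ℕ) (c : ℕ → T) (a b : T), b ≠ 0 → Q ≠ 0 → (∀ j < k, q j < Q) →
    a ^ Q = ∑ j ∈ Finset.range k, c j * b ^ (Q - q j) * a ^ q j → b ∣ a

open Polynomial in
lemma monic_sparse {T : Type} [CommRing T] [Nontrivial T] (k Q : ℕ) (q : ℕ → ℕ) (c : ℕ → T) (t : T)
    (hQ : Q ≠ 0) (hq : ∀ j < k, q j < Q) :
    (X ^ Q - (∑ j ∈ Finset.range k, C (c j) * X ^ q j + C t) : T[X]).Monic ∧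
    (X ^ Q - (∑ j ∈ Finset.range k, C (c j) * X ^ q j + C t) : T[X]).natDegree ≠ 0 := by
  have hdeg : (∑ j ∈ Finset.range k, C (c j) * X ^ q j + C t : T[X]).degree < (Q : ℕ) := by
    refine (degree_add_le _ _).trans_lt (max_lt ?_ ?_)
    · refine (degree_sum_le _ _).trans_lt ?_
      rw [Finset.sup_lt_iff (by exact_mod_cast WithBot.bot_lt_coe Q)]
      intro j hj
      refine (degree_C_mul_X_pow_le _ _).trans_lt ?_
      exact_mod_cast hq j (Finset.mem_range.mp hj)
    · refine degree_C_le.trans_lt ?_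
      exact_mod_cast Nat.pos_of_ne_zero hQ
  refine ⟨monic_X_pow_sub hdeg, ?_⟩
  rw [natDegree_sub_eq_left_of_natDegree_lt, natDegree_X_pow]
  · exact hQ
  · rw [natDegree_X_pow]
    by_cases h : (∑ j ∈ Finset.range k, C (c j) * X ^ q j + C t : T[X]) = 0
    · rw [h]; simpa using Nat.pos_of_ne_zero hQ
    · exact (natDegree_lt_iff_degree_lt h).mpr hdeg

open Polynomial in
/-- The integral closure in an algebraically closed field is absolutely integrally closed. -/
lemma absClosed_integralClosure (A Ω : Type) [CommRing A] [Field Ω] [IsAlgClosed Ω] [Algebra A Ω] :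
    AbsClosed (integralClosure A Ω) := by
  have mem : ∀ (k Q : ℕ) (q : ℕ → ℕ) (c : ℕ → integralClosure A Ω) (t : integralClosure A Ω),
      Q ≠ 0 → (∀ j < k, q j < Q) → ∀ z : Ω,
        z ^ Q = ∑ j ∈ Finset.range k, (c j : Ω) * z ^ q j + t → z ∈ integralClosure A Ω := by
    intro k Q q c t hQ hq z hz
    have : IsIntegral (integralClosure A Ω) z := by
      refine ⟨_, (monic_sparse k Q q c t hQ hq).1, ?_⟩
      simp only [eval₂_sub, eval₂_pow, eval₂_X, eval₂_add, eval₂_finsetSum, eval₂_mul, eval₂_C]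
      rw [hz]
      exact sub_self _
    exact isIntegral_trans z this
  constructor
  · intro k Q q c t hQ hq
    obtain ⟨h1, h2⟩ := monic_sparse k Q q c t hQ hq
    set f := (X ^ Q - (∑ j ∈ Finset.range k, C (c j) * X ^ q j + C t) : (integralClosure A Ω)[X])
      with hf
    obtain ⟨z, hz⟩ := IsAlgClosed.exists_eval₂_eq_zero_of_injective
      (algebraMap (integralClosure A Ω) Ω) Subtype.val_injective f (by
        intro h0; exact h2 (natDegree_eq_of_degree_eq_some h0))
    simp only [hf, eval₂_sub, eval₂_pow, eval₂_X, eval₂_add, eval₂_finsetSum, eval₂_mul,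
      eval₂_C] at hz
    have hz' := sub_eq_zero.mp hz
    refine ⟨⟨z, mem k Q q c t hQ hq z hz'⟩, Subtype.ext ?_⟩
    simp only [SubmonoidClass.coe_pow, hz']
    simp
  · intro k Q q c a b hb hQ hq hab
    have hb' : (b : Ω) ≠ 0 := fun h => hb (Subtype.ext h)
    have hab' := congrArg (algebraMap (integralClosure A Ω) Ω) hab
    simp only [map_pow, map_sum, map_mul] at hab'
    have hv := mem k Q q c 0 hQ hq ((a : Ω) / b) (by
      rw [div_pow, div_eq_iff (pow_ne_zero _ hb')]
      refine hab'.trans ?_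
      simp only [ZeroMemClass.coe_zero, add_zero, Finset.sum_mul]
      refine Finset.sum_congr rfl fun j hj => ?_
      rw [div_pow]
      have hj' := hq j (Finset.mem_range.mp hj)
      have : (b : Ω) ^ Q = (b : Ω) ^ (Q - q j) * (b : Ω) ^ q j := by
        rw [← pow_add, Nat.sub_add_cancel hj'.le]
      rw [this]
      have := pow_ne_zero (q j) hb'
      field_simp
      exact mul_right_comm _ _ _)
    refine ⟨⟨_, hv⟩, Subtype.ext ?_⟩
    simp
    field_simp

/-! ### Killing parameter relations with Frobenius -/

section Phi

variable {T : Type} [CommRing T]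

/-- The additive polynomial `y ^ Q - ∑ r_j X ^ (Q - q_j) y ^ q_j`; the `q_j` and `Q` are powers of
the characteristic in all uses. -/
def phi (k Q : ℕ) (q : ℕ → ℕ) (r : ℕ → T) (X y : T) : T :=
  y ^ Q - ∑ j ∈ Finset.range k, r j * X ^ (Q - q j) * y ^ q j

lemma phi_mul {k Q : ℕ} {q : ℕ → ℕ} (hq : ∀ j < k, q j < Q) (r : ℕ → T) (a a' y : T) :
    phi k Q q r (a * a') (a * y) = a ^ Q * phi k Q q r a' y := by
  rw [phi, phi, mul_sub, mul_pow, Finset.mul_sum]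
  congr 1
  refine Finset.sum_congr rfl fun j hj => ?_
  have : a ^ Q = a ^ (Q - q j) * a ^ q j := by
    rw [← pow_add, Nat.sub_add_cancel (hq j (Finset.mem_range.mp hj)).le]
  rw [this, mul_pow, mul_pow]; ring

lemma phi_sub {p : ℕ} [Fact p.Prime] [CharP T p] {k s : ℕ} {q : ℕ → ℕ}
    (r : ℕ → T) (X y z : T) :
    phi k (p ^ s) (fun j => p ^ q j) r X (y - z) =
      phi k (p ^ s) (fun j => p ^ q j) r X y - phi k (p ^ s) (fun j => p ^ q j) r X z := by
  simp only [phi, sub_pow_char_pow, mul_sub, Finset.sum_sub_distrib]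
  ring

lemma phi_sum {p : ℕ} [Fact p.Prime] [CharP T p] {k s : ℕ} {q : ℕ → ℕ}
    (r : ℕ → T) (X : T) {ι : Type} (I : Finset ι) (y : ι → T) :
    phi k (p ^ s) (fun j => p ^ q j) r X (∑ l ∈ I, y l) =
      ∑ l ∈ I, phi k (p ^ s) (fun j => p ^ q j) r X (y l) := by
  simp only [phi, sum_pow_char_pow, Finset.mul_sum, Finset.sum_sub_distrib]
  rw [Finset.sum_comm]

end Phi

/-- In a Noetherian module some term of any sequence is a combination of the earlier ones. -/
lemma exists_mem_span_prev {A M : Type} [CommRing A] [IsNoetherianRing A] [AddCommGroup M]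
    [Module A M] {S : Submodule A M} (hS : S.FG) (β : ℕ → M) (hβ : ∀ k, β k ∈ S) :
    ∃ (k : ℕ) (r : ℕ → A), β k = ∑ j ∈ Finset.range k, r j • β j := by
  have : IsNoetherian A S := isNoetherian_of_fg_of_noetherian S hS
  let g : ℕ →o Submodule A S :=
    ⟨fun k => Submodule.span A ((fun j => (⟨β j, hβ j⟩ : S)) '' (Finset.range k : Set ℕ)),
      fun a b hab => Submodule.span_mono (Set.image_mono (by
        intro t ht; simp at ht ⊢; omega))⟩
  obtain ⟨k, hk⟩ := monotone_stabilizes_iff_noetherian.mpr this g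
  have h1 : (⟨β k, hβ k⟩ : S) ∈ g k := by
    rw [hk (k + 1) (by omega)]
    exact Submodule.subset_span ⟨k, by simp, rfl⟩
  obtain ⟨r, hr⟩ := (Submodule.mem_span_image_finset_iff_exists_fun A).mp h1
  refine ⟨k, fun j => if h : j ∈ Finset.range k then r ⟨j, h⟩ else 0, ?_⟩
  have h2 := congrArg Subtype.val hr
  rw [← Finset.sum_coe_sort (Finset.range k)]
  simp only [Finset.coe_mem, dif_pos, Subtype.coe_eta]
  simpa using h2.symm

end BigCM

namespace BigCM

/-- The step from finite-length obstruction to vanishing: over an absolutely integrally closed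
`T` of characteristic `p`, a relation `x_i w ∈ (x_l : l ∈ I) T` is trivial as soon as all finitely
generated submodules of `T` have `m`-primary ideals of free multipliers and shorter
relations inside `I` are trivial. The Frobenius powers of the class of `w` live in a fixed finitely
generated module, so they satisfy an additive equation, which can be solved in `T`. -/
lemma mem_parSum_of_smul_mem {A T ι : Type} [CommRing A] [IsNoetherianRing A] [CommRing T]
    [IsDomain T] [Algebra A T] [Algebra.IsIntegral A T] (hT : AbsClosed T) (p : ℕ) [Fact p.Prime]
    [CharP T p] [DecidableEq ι]
    {x : ι → A} (hx : PowReg x A) {m : Ideal A} (hxm : ∀ i, x i ∈ m)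
    (hx0 : ∀ i, algebraMap A T (x i) ≠ 0)
    (hJ : ∀ N : Submodule A T, N.FG → ∃ a, ∀ c ∈ m ^ a, FreeMult N c) (I : Finset ι)
    (hI : ∀ P ⊆ I, ∀ j ∈ I, j ∉ P → ∀ (b : ι → ℕ) (w : T),
      x j • w ∈ parSum x (⊤ : Submodule A T) P b → w ∈ parSum x (⊤ : Submodule A T) P b)
    (i : ι) (hi : i ∉ I) (w : T) (hI0 : I.Nonempty)
    (hw : x i • w ∈ parSum x (⊤ : Submodule A T) I (fun _ => 1)) :
    w ∈ parSum x (⊤ : Submodule A T) I (fun _ => 1) := by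
  obtain ⟨u, -, hu⟩ := hw
  simp only [pow_one] at hu
  -- a finite subalgebra containing the relation
  let R₀ : Subalgebra A T := Algebra.adjoin A (insert w (u '' (I : Set ι)))
  have hR₀ : (Subalgebra.toSubmodule R₀).FG :=
    fg_adjoin_of_finite ((Set.Finite.image _ I.finite_toSet).insert w)
      fun y _ => Algebra.IsIntegral.isIntegral y
  have hwR : w ∈ R₀ := Algebra.subset_adjoin (Set.mem_insert _ _)
  have huR : ∀ l ∈ I, u l ∈ R₀ := fun l hl =>
    Algebra.subset_adjoin (Set.mem_insert_of_mem _ ⟨l, hl, rfl⟩)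
  obtain ⟨a, S, hS, h1⟩ := exists_uniform hx (hJ _ hR₀)
  have hrel : ∀ e : ℕ, ∀ c ∈ m ^ a, c • w ^ p ^ e ∈ parSum x S I (fun _ => p ^ e) := by
    intro e c hc
    refine h1 c hc I i hi (p ^ e) _ _ (pow_mem hwR _)
      ⟨fun l => if l ∈ I then u l ^ p ^ e else 0, fun l => ?_, ?_⟩
    · dsimp only
      split_ifs with h
      exacts [pow_mem (huR l h) _, zero_mem _]
    · rw [← smul_pow, hu, sum_pow_char_pow]
      refine Finset.sum_congr rfl fun l hl => ?_
      rw [smul_pow]; simp [hl]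
  obtain ⟨S', M₀, hS', h2⟩ := uniform_decomposition hx hxm hJ I hI I ∅ (by simp) (by simp)
    (fun _ => 0) (Subalgebra.toSubmodule R₀ ⊔ S) (hR₀.sup hS) a
  simp only [Finset.empty_union] at h2
  have hdec : ∀ k : ℕ, ∃ e ∈ parSum x S' I (fun _ => p ^ (M₀ + k)), ∃ s ∈ S',
      w ^ p ^ (M₀ + k) = e + (∏ l ∈ I, x l ^ (p ^ (M₀ + k) - M₀)) • s := by
    intro k
    have hmix : ∀ K : Submodule A T, parSum x K I (mix I (p ^ (M₀ + k)) fun _ => 0) =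
        parSum x K I (fun _ => p ^ (M₀ + k)) := fun K => parSum_congr fun l hl => by
      simp [mix, hl]
    have hge : M₀ ≤ p ^ (M₀ + k) :=
      (Nat.le_add_right M₀ k).trans (Nat.lt_pow_self (Fact.out : p.Prime).one_lt).le
    obtain ⟨e, he, s, hs, h, -⟩ := h2 (p ^ (M₀ + k)) hge (w ^ p ^ (M₀ + k))
      (Submodule.mem_sup_left (pow_mem hwR _)) (fun c hc => by
        rw [hmix]; exact parSum_mono le_sup_right _ _ (hrel _ c hc))
    exact ⟨e, hmix S' ▸ he, s, hs, h⟩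
  choose e he β hβ hwβ using hdec
  choose t _ ht using he
  obtain ⟨k, r, hr⟩ := exists_mem_span_prev hS' β hβ
  -- the additive equation satisfied by `w` modulo `(x_l ^ Q)`
  let X : T := ∏ l ∈ I, algebraMap A T (x l)
  let X' : ι → T := fun l => ∏ l' ∈ I.erase l, algebraMap A T (x l')
  have hXX' : ∀ l ∈ I, algebraMap A T (x l) * X' l = X := fun l hl =>
    Finset.mul_prod_erase I (fun l => algebraMap A T (x l)) hl
  let Q := p ^ (M₀ + k)
  let q : ℕ → ℕ := fun j => p ^ (M₀ + j)
  let ρ : ℕ → T := fun j => algebraMap A T (r j)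
  have hq : ∀ j < k, q j < Q := fun j hj =>
    Nat.pow_lt_pow_right (Fact.out : p.Prime).one_lt (by omega)
  have hQ : Q ≠ 0 := pow_ne_zero _ (Fact.out : p.Prime).ne_zero
  have hge : ∀ j, M₀ ≤ q j := fun j =>
    (Nat.le_add_right M₀ j).trans (Nat.lt_pow_self (Fact.out : p.Prime).one_lt).le
  have hwβ' : ∀ j, w ^ q j = e j + X ^ (q j - M₀) * β j := fun j => by
    rw [hwβ j, Algebra.smul_def, map_prod, ← Finset.prod_pow]; simp [q]
  have ht' : ∀ j, e j = ∑ l ∈ I, algebraMap A T (x l) ^ q j * t j l := fun j => by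
    rw [ht j]; refine Finset.sum_congr rfl fun l _ => ?_
    rw [Algebra.smul_def, map_pow]
  let τ : ι → T := fun l => t k l - ∑ j ∈ Finset.range k, ρ j * X' l ^ (Q - q j) * t j l
  have hphi : phi k Q q ρ X w = ∑ l ∈ I, algebraMap A T (x l) ^ Q * τ l := by
    have h3 : ∀ j ∈ Finset.range k, ρ j * X ^ (Q - q j) * w ^ q j =
        ρ j * X ^ (Q - q j) * e j + X ^ (Q - M₀) * (ρ j * β j) := fun j hj => by
      have h4 : Q - M₀ = (Q - q j) + (q j - M₀) := by
        have := hq j (Finset.mem_range.mp hj); have := hge j; omega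
      rw [hwβ' j, h4, pow_add]; ring
    have h5 : β k = ∑ j ∈ Finset.range k, ρ j * β j := by
      rw [hr]; exact Finset.sum_congr rfl fun j _ => Algebra.smul_def _ _
    rw [phi, show w ^ Q = _ from hwβ' k, Finset.sum_congr rfl h3, Finset.sum_add_distrib,
      ← Finset.mul_sum, ← h5, show q k = Q from rfl, add_sub_add_right_eq_sub, ht' k]
    simp only [τ, mul_sub, Finset.sum_sub_distrib, ht', Finset.mul_sum]
    congr 1
    rw [Finset.sum_comm]
    refine Finset.sum_congr rfl fun l hl => Finset.sum_congr rfl fun j hj => ?_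
    have h6 : algebraMap A T (x l) ^ Q =
        algebraMap A T (x l) ^ (Q - q j) * algebraMap A T (x l) ^ q j := by
      rw [← pow_add, Nat.sub_add_cancel (hq j (Finset.mem_range.mp hj)).le]
    rw [← hXX' l hl, mul_pow, h6]; ring
  choose z hz using fun l => hT.root k Q q (fun j => ρ j * X' l ^ (Q - q j)) (τ l) hQ hq
  have hzphi : ∀ l, phi k Q q ρ (X' l) (z l) = τ l := fun l => by
    rw [phi, hz l]; ring
  have hzero : phi k Q q ρ X (w - ∑ l ∈ I, algebraMap A T (x l) * z l) = 0 := by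
    rw [show phi k Q q ρ X (w - ∑ l ∈ I, algebraMap A T (x l) * z l) = _ from phi_sub ρ X _ _,
      show phi k (p ^ (M₀ + k)) (fun j => p ^ (M₀ + j)) ρ X
        (∑ l ∈ I, algebraMap A T (x l) * z l) = _ from phi_sum ρ X I _,
      show phi k (p ^ (M₀ + k)) (fun j => p ^ (M₀ + j)) ρ X w = _ from hphi, sub_eq_zero]
    refine Finset.sum_congr rfl fun l hl => ?_
    rw [show phi k (p ^ (M₀ + k)) (fun j => p ^ (M₀ + j)) ρ X (algebraMap A T (x l) * z l) =
      phi k Q q ρ X (algebraMap A T (x l) * z l) from rfl, ← hXX' l hl, phi_mul hq, hzphi]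
  have hX0 : X ≠ 0 := Finset.prod_ne_zero_iff.mpr fun l _ => hx0 l
  obtain ⟨v, hv⟩ := hT.dvd k Q q ρ _ X hX0 hQ hq (sub_eq_zero.mp hzero)
  obtain ⟨l₀, hl₀⟩ := hI0
  refine ⟨fun l => z l + if l = l₀ then X' l₀ * v else 0, by simp, ?_⟩
  simp only [pow_one, smul_add, Finset.sum_add_distrib, smul_ite, smul_zero, Finset.sum_ite_eq',
    hl₀, if_true]
  rw [sub_eq_iff_eq_add.mp hv, Algebra.smul_def, ← mul_assoc, hXX' l₀ hl₀, add_comm]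
  simp only [Algebra.smul_def]

end BigCM

/-! ### Regularity in every order and with all powers -/

namespace BigCM

open RingTheory.Sequence

section PowReg

variable {A : Type} [CommRing A] {ι : Type} {M : Type} [AddCommGroup M] [Module A M]

lemma PowReg.pow {x : ι → A} (h : PowReg x M) (b : ι → ℕ) : PowReg (fun i => x i ^ b i) M := by
  have key : ∀ I c, parSum (fun i => x i ^ b i) (⊤ : Submodule A M) I c =
      parSum x ⊤ I (fun l => b l * c l) := fun I c => by
    ext w; simp only [mem_parSum, pow_mul]
  intro I i hi c w hw
  rw [key] at hw ⊢
  exact of_pow_smul_mem (h I i hi _) (b i) w hw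

lemma parSum_eq_top {x : ι → A} [DecidableEq ι] {I : Finset ι} {b : ι → ℕ} {j : ι} (hj : j ∈ I)
    (hb : b j = 0) : parSum x (⊤ : Submodule A M) I b = ⊤ := by
  refine eq_top_iff.mpr fun w _ => ⟨fun l => if l = j then w else 0, by simp, ?_⟩
  simp [hj, hb]

/-- Regularity in every order implies regularity in every order with all powers. -/
lemma powReg_of_one {x : ι → A} [DecidableEq ι]
    (h : ∀ (I : Finset ι) (i : ι), i ∉ I → ∀ (w : M),
      x i • w ∈ parSum x (⊤ : Submodule A M) I (fun _ => 1) →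
        w ∈ parSum x (⊤ : Submodule A M) I (fun _ => 1)) : PowReg x M := by
  suffices H : ∀ (n : ℕ) (I : Finset ι) (i : ι), i ∉ I → ∀ (b : ι → ℕ), ∑ l ∈ I, b l = n →
      ∀ (w : M), x i • w ∈ parSum x (⊤ : Submodule A M) I b →
        w ∈ parSum x (⊤ : Submodule A M) I b from
    fun I i hi b => H _ I i hi b rfl
  intro n
  induction n using Nat.strong_induction_on with
  | _ n ih =>
    intro I i hi b hn w hw
    by_cases h0 : ∃ j ∈ I, b j = 0
    · obtain ⟨j, hj, hb⟩ := h0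
      rw [parSum_eq_top hj hb]; trivial
    by_cases h1 : ∃ j ∈ I, 2 ≤ b j
    · obtain ⟨j, hj, hb⟩ := h1
      obtain ⟨I', hI', rfl⟩ : ∃ I', j ∉ I' ∧ insert j I' = I :=
        ⟨I.erase j, Finset.notMem_erase _ _, Finset.insert_erase hj⟩
      have hiI' : i ∉ I' := fun hh => hi (Finset.mem_insert_of_mem hh)
      have hupd : ∀ t, parSum x (⊤ : Submodule A M) I' (Function.update b j t) =
          parSum x ⊤ I' b := fun t => parSum_congr fun l hl => by
        rw [Function.update_of_ne (by rintro rfl; exact hI' hl)]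
      have hsum : ∀ t, ∑ l ∈ insert j I', Function.update b j t l = t + ∑ l ∈ I', b l := by
        intro t
        rw [Finset.sum_insert hI', Function.update_self]
        congr 1
        exact Finset.sum_congr rfl fun l hl => by
          rw [Function.update_of_ne (by rintro rfl; exact hI' hl)]
      rw [Finset.sum_insert hI'] at hn
      obtain ⟨e, he, u, -, heu⟩ := (mem_parSum_insert hI').mp hw
      have hpow : x j ^ b j = x j ^ (b j - 1) * x j := by
        rw [← pow_succ]; congr 1; omega
      -- lower the exponent of `x_j` by one, then divide by `x_j ^ (b_j - 1)`
      have hw1 := ih (b j - 1 + ∑ l ∈ I', b l) (by omega) (insert j I') i hi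
        (Function.update b j (b j - 1)) (hsum _) w ((mem_parSum_insert hI').mpr
          ⟨e, (hupd _).symm ▸ he, x j • u, trivial, by
            rw [heu, Function.update_self, smul_smul, hpow]⟩)
      obtain ⟨e', he', v, -, hev⟩ := (mem_parSum_insert hI').mp hw1
      rw [hupd] at he'
      rw [Function.update_self] at hev
      have h3 : x j ^ (b j - 1) • (x i • v - x j • u) ∈ parSum x (⊤ : Submodule A M) I' b := by
        have : x j ^ (b j - 1) • (x i • v - x j • u) = e - x i • e' := by
          rw [hev, smul_add] at heu
          rw [smul_sub, smul_smul, smul_smul, ← hpow, mul_comm, mul_smul]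
          rw [sub_eq_sub_iff_add_eq_add, ← heu]; abel
        rw [this]
        exact sub_mem he (Submodule.smul_mem _ _ he')
      have h4 := of_pow_smul_mem (ih (∑ l ∈ I', b l) (by omega) I' j hI' b rfl) _ _ h3
      have h5 := ih (1 + ∑ l ∈ I', b l) (by omega) (insert j I') i hi
        (Function.update b j 1) (hsum _) v ((mem_parSum_insert hI').mpr
          ⟨_, (hupd _).symm ▸ h4, u, trivial, by simp⟩)
      obtain ⟨e₂, he₂, u₂, -, hv⟩ := (mem_parSum_insert hI').mp h5
      rw [hupd] at he₂
      rw [Function.update_self, pow_one] at hv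
      refine (mem_parSum_insert hI').mpr ⟨e' + x j ^ (b j - 1) • e₂,
        add_mem he' (Submodule.smul_mem _ _ he₂), u₂, trivial, ?_⟩
      rw [hev, hv, hpow, mul_smul, smul_add, add_assoc]
    · push Not at h0 h1
      have : parSum x (⊤ : Submodule A M) I b = parSum x ⊤ I (fun _ => 1) :=
        parSum_congr fun l hl => by have := h0 l hl; have := h1 l hl; omega
      rw [this] at hw ⊢
      exact h I i hi w hw

lemma parSum_one {x : ι → A} [DecidableEq ι] (I : Finset ι) :
    parSum x (⊤ : Submodule A M) I (fun _ => 1) = Ideal.ofList (I.toList.map x) • ⊤ := by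
  apply le_antisymm
  · rintro _ ⟨u, -, rfl⟩
    refine sum_mem fun l hl => ?_
    rw [pow_one]
    exact Submodule.smul_mem_smul (Ideal.subset_span (by simpa using ⟨l, hl, rfl⟩)) trivial
  · refine Submodule.smul_le.mpr fun r hr w _ => ?_
    induction hr using Submodule.span_induction with
    | zero => simp
    | add c c' _ _ h1 h2 => rw [add_smul]; exact add_mem h1 h2
    | smul r c _ h1 => rw [smul_assoc]; exact Submodule.smul_mem _ _ h1
    | mem c hc =>
      obtain ⟨l, hl, rfl⟩ : ∃ l ∈ I, x l = c := by simpa using hc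
      exact ⟨fun l' => if l' = l then w else 0, by simp, by simp [hl]⟩

/-- A weakly regular sequence in the maximal ideal of a Noetherian local ring is regular in every
order and with all powers. -/
lemma powReg_of_isWeaklyRegular [IsLocalRing A] [IsNoetherian A M] {n : ℕ} {x : Fin n → A}
    (hxm : ∀ i, x i ∈ IsLocalRing.maximalIdeal A) (h : IsWeaklyRegular M (List.ofFn x)) :
    PowReg x M := by
  refine powReg_of_one fun I i hi w hw => ?_
  have hnd : (I.toList ++ i :: (insert i I)ᶜ.toList).Nodup := by
    rw [List.nodup_append]
    refine ⟨I.nodup_toList, ?_, ?_⟩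
    · rw [List.nodup_cons]; exact ⟨by simp, Finset.nodup_toList _⟩
    · intro a ha b hb
      simp at ha hb
      rintro rfl
      rcases hb with rfl | hb
      · exact hi ha
      · exact hb.2 ha
  have hperm : (List.ofFn x).Perm ((I.toList ++ i :: (insert i I)ᶜ.toList).map x) := by
    rw [List.ofFn_eq_map]
    refine List.Perm.map x ((List.perm_ext_iff_of_nodup (List.nodup_finRange n) hnd).mpr ?_)
    intro a
    simp
    tauto
  have h' := IsLocalRing.isWeaklyRegular_of_perm_of_subset_maximalIdeal h hperm (by
    intro r hr; obtain ⟨j, rfl⟩ := (List.mem_ofFn' _ _).mp hr; exact hxm j)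
  rw [List.map_append, List.map_cons, isWeaklyRegular_append_iff, isWeaklyRegular_cons_iff] at h'
  rw [parSum_one] at hw ⊢
  rw [← Submodule.Quotient.mk_eq_zero] at hw ⊢
  exact h'.2.1 (by simpa using hw)

end PowReg

/-- If finitely generated submodules of the absolutely integrally closed integral extension `T` have
`m`-primary ideals of free multipliers, then parameters regular on `A` are regular on `T`. -/
lemma powReg_of_freeMult {A T ι : Type} [CommRing A] [IsNoetherianRing A] [CommRing T]
    [IsDomain T] [Algebra A T] [Algebra.IsIntegral A T] (hT : AbsClosed T) (p : ℕ) [Fact p.Prime]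
    [CharP T p] [DecidableEq ι]
    {x : ι → A} (hx : PowReg x A) {m : Ideal A} (hxm : ∀ i, x i ∈ m)
    (hx0 : ∀ i, algebraMap A T (x i) ≠ 0)
    (hJ : ∀ N : Submodule A T, N.FG → ∃ a, ∀ c ∈ m ^ a, FreeMult N c) : PowReg x T := by
  suffices H : ∀ (n : ℕ) (I : Finset ι) (i : ι), i ∉ I → I.card = n → ∀ (b : ι → ℕ) (w : T),
      x i • w ∈ parSum x (⊤ : Submodule A T) I b → w ∈ parSum x (⊤ : Submodule A T) I b from
    fun I i hi b => H _ I i hi rfl b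
  intro n
  induction n using Nat.strong_induction_on with
  | _ n ih =>
    intro I i hi hn b w hw
    by_cases h0 : ∃ j ∈ I, b j = 0
    · obtain ⟨j, hj, hb⟩ := h0
      rw [parSum_eq_top hj hb]; trivial
    push Not at h0
    rcases I.eq_empty_or_nonempty with rfl | hI
    · obtain ⟨u, -, hu⟩ := hw
      rw [Finset.sum_empty, Algebra.smul_def] at hu
      rw [(mul_eq_zero.mp hu).resolve_left (hx0 i)]
      exact zero_mem _
    -- replace `x_l` by `x_l ^ b_l` for `l ∈ I`
    let b' : ι → ℕ := fun l => if l ∈ I then b l else 1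
    have hb' : ∀ l, b' l ≠ 0 := fun l => by
      by_cases hl : l ∈ I
      · simpa [b', hl] using h0 l hl
      · simp [b', hl]
    have key : ∀ P c, parSum (fun i => x i ^ b' i) (⊤ : Submodule A T) P c =
        parSum x ⊤ P (fun l => b' l * c l) := fun P c => by
      ext w; simp only [mem_parSum, pow_mul]
    have hb1 : parSum (fun i => x i ^ b' i) (⊤ : Submodule A T) I (fun _ => 1) =
        parSum x ⊤ I b := by
      rw [key]; exact parSum_congr fun l hl => by simp [b', hl]
    rw [← hb1] at hw ⊢
    refine mem_parSum_of_smul_mem hT p (hx.pow b') (fun l => Ideal.pow_mem_of_mem _ (hxm l) _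
      (Nat.pos_of_ne_zero (hb' l))) (fun l => by rw [map_pow]; exact pow_ne_zero _ (hx0 l)) hJ I
      ?_ i hi w hI (by simpa [b', hi] using hw)
    intro P hP j hj hjP c w hw
    rw [key] at hw ⊢
    exact of_pow_smul_mem (ih P.card (hn ▸ Finset.card_lt_card
      (Finset.ssubset_iff_subset_ne.mpr ⟨hP, by rintro rfl; exact hjP hj⟩)) P j hjP rfl _) _ w hw

/-- A maximal regular sequence in the maximal ideal: the residue field embeds in the quotient. -/
lemma exists_maximal_regular (A : Type) [CommRing A] [IsLocalRing A] [IsNoetherianRing A] :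
    ∃ rs : List A, (∀ r ∈ rs, r ∈ IsLocalRing.maximalIdeal A) ∧ IsWeaklyRegular A rs ∧
      ∃ e ∉ Ideal.ofList rs, ∀ c ∈ IsLocalRing.maximalIdeal A, c * e ∈ Ideal.ofList rs := by
  by_contra hcon
  push Not at hcon
  obtain ⟨I, ⟨rs, hrs, hreg, rfl⟩, hmax⟩ := set_has_maximal_iff_noetherian.mpr ‹_›
    {I : Ideal A | ∃ rs : List A, (∀ r ∈ rs, r ∈ IsLocalRing.maximalIdeal A) ∧
      IsWeaklyRegular A rs ∧ I = Ideal.ofList rs} ⟨⊥, [], by simp, IsWeaklyRegular.nil _ _, by simp⟩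
  have hle : Ideal.ofList rs ≤ IsLocalRing.maximalIdeal A := Ideal.span_le.mpr hrs
  have hsub : Subsingleton ((A ⧸ IsLocalRing.maximalIdeal A) →ₗ[A] (A ⧸ Ideal.ofList rs)) := by
    refine ⟨fun f g => ?_⟩
    have key : ∀ f : (A ⧸ IsLocalRing.maximalIdeal A) →ₗ[A] (A ⧸ Ideal.ofList rs),
        f 1 = 0 := by
      intro f
      by_contra hf
      obtain ⟨e, he⟩ := Ideal.Quotient.mk_surjective (f 1)
      obtain ⟨c, hc, hce⟩ := hcon rs hrs hreg e (fun h => hf (by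
        rw [← he]; exact Ideal.Quotient.eq_zero_iff_mem.mpr h))
      apply hce
      rw [← Ideal.Quotient.eq_zero_iff_mem, map_mul, he, ← Ideal.Quotient.algebraMap_eq,
        ← Algebra.smul_def, ← map_smul, Algebra.smul_def, mul_one, Ideal.Quotient.algebraMap_eq,
        Ideal.Quotient.eq_zero_iff_mem.mpr hc, map_zero]
    ext
    exact (key f).trans (key g).symm
  obtain ⟨r, hr, hrreg⟩ := IsSMulRegular.subsingleton_linearMap_iff.mp hsub
  rw [Ideal.annihilator_quotient] at hr
  have hrI : r ∉ Ideal.ofList rs := by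
    intro h
    have h1 : r • (1 : A ⧸ Ideal.ofList rs) = r • 0 := by
      rw [smul_zero, Algebra.smul_def, mul_one, Ideal.Quotient.algebraMap_eq]
      exact Ideal.Quotient.eq_zero_iff_mem.mpr h
    have h2 := hrreg h1
    rw [← map_one (Ideal.Quotient.mk _), Ideal.Quotient.eq_zero_iff_mem] at h2
    exact (IsLocalRing.maximalIdeal.isMaximal A).ne_top ((Ideal.eq_top_iff_one _).mpr (hle h2))
  refine hmax (Ideal.ofList (rs ++ [r])) ⟨rs ++ [r], ?_, ?_, rfl⟩ ?_
  · intro s hs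
    rcases List.mem_append.mp hs with h | h
    · exact hrs s h
    · rw [List.mem_singleton.mp h]; exact hr
  · rw [isWeaklyRegular_append_iff, isWeaklyRegular_singleton_iff]
    refine ⟨hreg, ?_⟩
    have e : (A ⧸ Ideal.ofList rs) ≃ₗ[A] (A ⧸ (Ideal.ofList rs • ⊤ : Submodule A A)) :=
      Submodule.quotEquivOfEq _ _ (by simp)
    exact (e.isSMulRegular_congr r).mp hrreg
  · rw [Ideal.ofList_append, Ideal.ofList_singleton]
    refine lt_of_le_of_ne le_sup_left fun h => hrI ?_
    rw [h]
    exact Ideal.mem_sup_right (Ideal.mem_span_singleton_self r)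

end BigCM

/-! ### Vanishing of Ext and the syzygy theorem -/

namespace BigCM

open CategoryTheory CategoryTheory.Abelian RingTheory.Sequence

section Ext

variable {A : Type} [CommRing A]

lemma shortExact_of {N₁ N₂ N₃ : Type} [AddCommGroup N₁] [Module A N₁] [AddCommGroup N₂]
    [Module A N₂] [AddCommGroup N₃] [Module A N₃] (f : N₁ →ₗ[A] N₂) (g : N₂ →ₗ[A] N₃)
    (hf : Function.Injective f) (hg : Function.Surjective g) (h : Function.Exact f g) :
    (ModuleCat.shortComplexOfCompEqZero f g h.linearMap_comp_eq_zero).ShortExact where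
  exact := ModuleCat.shortComplex_exact _ h
  mono_f := (ModuleCat.mono_iff_injective _).mpr hf
  epi_g := (ModuleCat.epi_iff_surjective _).mpr hg

variable (E : ModuleCat.{0} A)

lemma ext_mid {S : ShortComplex (ModuleCat.{0} A)} (hS : S.ShortExact) {s : ℕ}
    (h₁ : Subsingleton (Ext S.X₁ E s)) (h₃ : Subsingleton (Ext S.X₃ E s)) :
    Subsingleton (Ext S.X₂ E s) := by
  refine subsingleton_of_forall_eq 0 fun y => ?_
  obtain ⟨z, rfl⟩ := Ext.contravariant_sequence_exact₂ hS E y (Subsingleton.elim _ _)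
  rw [Subsingleton.elim z 0, Ext.comp_zero]

lemma ext_left {S : ShortComplex (ModuleCat.{0} A)} (hS : S.ShortExact) {s : ℕ}
    (h₁ : Subsingleton (Ext S.X₂ E s)) (h₃ : Subsingleton (Ext S.X₃ E (s + 1))) :
    Subsingleton (Ext S.X₁ E s) := by
  refine subsingleton_of_forall_eq 0 fun y => ?_
  obtain ⟨z, rfl⟩ := Ext.contravariant_sequence_exact₁ hS E y (add_comm 1 s)
    (Subsingleton.elim _ _)
  rw [Subsingleton.elim z 0, Ext.comp_zero]

lemma ext_right {S : ShortComplex (ModuleCat.{0} A)} (hS : S.ShortExact) {s : ℕ}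
    (h₁ : Subsingleton (Ext S.X₁ E s)) (h₃ : Subsingleton (Ext S.X₂ E (s + 1))) :
    Subsingleton (Ext S.X₃ E (s + 1)) := by
  refine subsingleton_of_forall_eq 0 fun y => ?_
  obtain ⟨z, rfl⟩ := Ext.contravariant_sequence_exact₃ hS E y (Subsingleton.elim _ _)
    (add_comm 1 s)
  rw [Subsingleton.elim z 0, Ext.comp_zero]

lemma ext_congr {M N : Type} [AddCommGroup M] [Module A M] [AddCommGroup N] [Module A N]
    (e : M ≃ₗ[A] N) {s : ℕ} (h : Subsingleton (Ext (ModuleCat.of A N) E s)) :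
    Subsingleton (Ext (ModuleCat.of A M) E s) := by
  refine subsingleton_of_forall_eq 0 fun y => ?_
  have : y = (Ext.mk₀ e.toModuleIso.hom).comp ((Ext.mk₀ e.toModuleIso.inv).comp y (zero_add s))
      (zero_add s) := by
    rw [Ext.mk₀_comp_mk₀_assoc, Iso.hom_inv_id, Ext.mk₀_id_comp]
  rw [this, Subsingleton.elim ((Ext.mk₀ e.toModuleIso.inv).comp y (zero_add s)) 0, Ext.comp_zero]

/-- If `r` is regular on `M` and `Ext^{s+1}(M / r M, E) = 0`, then `r` acts surjectively on
`Ext^s(M, E)`. -/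
lemma ext_smul_surjective (M : ModuleCat.{0} A) {r : A} (hr : IsSMulRegular M r) {s : ℕ}
    (h : Subsingleton (Ext (ModuleCat.of A (QuotSMulTop r M)) E (s + 1))) (y : Ext M E s) :
    ∃ z : Ext M E s, r • z = y := by
  have hS := hr.smulShortComplex_shortExact (M := M)
  have h' : Subsingleton (Ext (M.smulShortComplex r).X₃ E (s + 1)) := h
  have h2 : ∀ z : Ext M E s, (Ext.mk₀ (r • 𝟙 M)).comp z (zero_add s) = r • z := fun z => by
    rw [Ext.mk₀_smul, Ext.smul_comp, Ext.mk₀_id_comp]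
  obtain ⟨z, hz⟩ := Ext.contravariant_sequence_exact₁ hS E y (add_comm 1 s) (Subsingleton.elim _ _)
  exact ⟨z, (h2 z).symm.trans hz⟩

/-- Vanishing of `Ext` on the residue field propagates to all finite modules, given a form of
Nakayama's lemma for the `Ext` groups. -/
lemma ext_vanish_of_residue [IsLocalRing A] [IsNoetherianRing A] (s₀ : ℕ)
    (hk : ∀ s ≥ s₀, Subsingleton (Ext (ModuleCat.of A (A ⧸ IsLocalRing.maximalIdeal A)) E s))
    (hN : ∀ r ∈ IsLocalRing.maximalIdeal A, ∀ s ≥ s₀, ∀ M : ModuleCat.{0} A, Module.Finite A M →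
      (∀ y : Ext M E s, ∃ z, r • z = y) → Subsingleton (Ext M E s))
    (M : Type) [AddCommGroup M] [Module A M] [Module.Finite A M] (s : ℕ) (hs : s₀ ≤ s) :
    Subsingleton (Ext (ModuleCat.of A M) E s) := by
  suffices H : ∀ I : Ideal A, ∀ (M : Type) [AddCommGroup M] [Module A M] [Module.Finite A M],
      I ≤ Module.annihilator A M → ∀ s ≥ s₀, Subsingleton (Ext (ModuleCat.of A M) E s) from
    H ⊥ M bot_le s hs
  intro I
  induction I using IsNoetherian.induction with
  | hgt I ih =>
    intro M _ _ hfin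
    induction hfin using IsNoetherianRing.induction_on_isQuotientEquivQuotientPrime A with
    | subsingleton N =>
      intro _ s _
      refine subsingleton_of_forall_eq 0 fun y => ?_
      have : HasProjectiveDimensionLT (ModuleCat.of A N) 0 :=
        (ModuleCat.isZero_of_subsingleton (ModuleCat.of A N)).hasProjectiveDimensionLT_zero
      exact Ext.eq_zero_of_hasProjectiveDimensionLT y 0 (Nat.zero_le _)
    | exact N₁ N₂ N₃ f g hf hg hfg h₁ h₃ =>
      intro hI s hs
      exact ext_mid E (shortExact_of f g hf hg hfg)
        (h₁ (hI.trans (LinearMap.annihilator_le_of_injective f hf)) s hs)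
        (h₃ (hI.trans (LinearMap.annihilator_le_of_surjective g hg)) s hs)
    | quotient N Q e =>
      intro hI s hs
      refine ext_congr E e ?_
      rw [e.annihilator_eq, Ideal.annihilator_quotient] at hI
      rcases hI.lt_or_eq with hlt | heq
      · exact ih _ hlt (A ⧸ Q.1) (Ideal.annihilator_quotient (I := Q.1)).ge s hs
      by_cases hQ : Q.1 = IsLocalRing.maximalIdeal A
      · rw [hQ]; exact hk s hs
      obtain ⟨r, hrm, hrQ⟩ : ∃ r ∈ IsLocalRing.maximalIdeal A, r ∉ Q.1 := by
        by_contra! hcon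
        exact hQ (le_antisymm (IsLocalRing.le_maximalIdeal Q.2.ne_top) hcon)
      have hreg : IsSMulRegular (A ⧸ Q.1) r := by
        intro a b hab
        have := Q.2
        have h0 : Ideal.Quotient.mk Q.1 r ≠ 0 := fun h => hrQ (Ideal.Quotient.eq_zero_iff_mem.mp h)
        refine mul_left_cancel₀ h0 ?_
        simpa [Algebra.smul_def] using hab
      refine hN r hrm s hs (ModuleCat.of A (A ⧸ Q.1)) (inferInstanceAs (Module.Finite A (A ⧸ Q.1)))
        (ext_smul_surjective E _ hreg ?_)
      refine ih (I ⊔ Ideal.span {r}) ?_ _ ?_ (s + 1) (by omega)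
      · refine lt_of_le_of_ne le_sup_left fun h => hrQ ?_
        rw [← heq, h]
        exact Ideal.mem_sup_right (Ideal.mem_span_singleton_self r)
      · refine sup_le ?_ ?_
        · rw [heq]
          refine le_trans (Ideal.annihilator_quotient (I := Q.1)).ge ?_
          exact LinearMap.annihilator_le_of_surjective (Submodule.mkQ _) (Submodule.mkQ_surjective _)
        · rw [Ideal.span_singleton_le_iff_mem]
          exact QuotSMulTop.mem_annihilator _ r

end Ext

/-- Hilbert's syzygy theorem for a local ring whose maximal ideal is generated by a regular
sequence. -/
lemma hasProjectiveDimensionLT_of_regular {A : Type} [CommRing A] [IsLocalRing A]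
    [IsNoetherianRing A] (rs : List A) (hrs : IsRegular A rs)
    (hm : Ideal.ofList rs = IsLocalRing.maximalIdeal A) (M : ModuleCat.{0} A) [Module.Finite A M] :
    HasProjectiveDimensionLT M (rs.length + 1) := by
  have hk : HasProjectiveDimensionLE (ModuleCat.of A (A ⧸ IsLocalRing.maximalIdeal A)) rs.length := by
    rw [← hm]
    have h := (projectiveDimension_le_iff _ _).mp
      (ModuleCat.projectiveDimension_quotient_eq_length.{0} rs hrs).le
    exact ModuleCat.hasProjectiveDimensionLE_of_linearEquiv
      (M := ModuleCat.of A (Shrink.{0} (A ⧸ Ideal.ofList rs)))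
      (N := ModuleCat.of A (A ⧸ Ideal.ofList rs)) (Shrink.linearEquiv A _) _
  apply ModuleCat.hasProjectiveDimensionLT_of_forall_finite
  intro L _
  refine ext_vanish_of_residue L (rs.length + 1) (fun s hs => ?_) (fun r hr s hs N _ h => ?_) M _ le_rfl
  · exact HasProjectiveDimensionLT.subsingleton _ (rs.length + 1) s hs L
  · by_contra! ntr
    have : r ∈ (Module.annihilator A (Ext N L s)).jacobson :=
      (IsLocalRing.maximalIdeal_le_jacobson _) hr
    absurd Submodule.top_ne_pointwise_smul_of_mem_jacobson_annihilator this
    rw [eq_comm, eq_top_iff]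
    intro y _
    obtain ⟨z, rfl⟩ := h y
    exact Submodule.smul_mem_pointwise_smul _ _ ⊤ trivial

end BigCM

/-! ### Ext into character modules -/

namespace BigCM

open CategoryTheory CategoryTheory.Abelian RingTheory.Sequence TensorProduct

section CharExt

variable {A : Type} [CommRing A] {T : Type} [AddCommGroup T] [Module A T]

/-- The character module of `T`, as an object of the category of `A`-modules. -/
noncomputable abbrev charMod (A T : Type) [CommRing A] [AddCommGroup T] [Module A T] :
    ModuleCat.{0} A := ModuleCat.of A (CharacterModule T)

/-- A homomorphism into a character module extends along `f` as soon as the corresponding character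
kills the kernel of `f ⊗ T`. -/
lemma exists_extension {K F : Type} [AddCommGroup K] [Module A K] [AddCommGroup F] [Module A F]
    (f : K →ₗ[A] F) (g : K →ₗ[A] CharacterModule T)
    (hg : ∀ τ : K ⊗[A] T, f.rTensor T τ = 0 → CharacterModule.uncurry g τ = 0) :
    ∃ h : F →ₗ[A] CharacterModule T, h ∘ₗ f = g := by
  let Q := LinearMap.ker (f.rTensor T)
  let fb : (K ⊗[A] T ⧸ Q) →ₗ[A] F ⊗[A] T := Q.liftQ (f.rTensor T) le_rfl
  have hfb : Function.Injective fb := by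
    rw [← LinearMap.ker_eq_bot]; exact Submodule.ker_liftQ_eq_bot' _ _ rfl
  let χ : CharacterModule (K ⊗[A] T ⧸ Q) :=
    QuotientAddGroup.lift Q.toAddSubgroup (CharacterModule.uncurry g : K ⊗[A] T →+ _)
      fun τ hτ => hg τ hτ
  obtain ⟨χ', hχ'⟩ := CharacterModule.dual_surjective_of_injective fb hfb χ
  refine ⟨CharacterModule.curry χ', ?_⟩
  ext a t
  exact DFunLike.congr_fun hχ' (Submodule.Quotient.mk (a ⊗ₜ t))

/-- Multiplication by `r` is surjective on `Hom(M, T^*)` if `r` is regular on `M ⊗ T`. -/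
lemma hom_smul_surjective {M : Type} [AddCommGroup M] [Module A M] {r : A}
    (hr : IsSMulRegular (M ⊗[A] T) r) (g : M →ₗ[A] CharacterModule T) :
    ∃ g' : M →ₗ[A] CharacterModule T, r • g' = g := by
  obtain ⟨χ, hχ⟩ := CharacterModule.dual_surjective_of_injective
    (LinearMap.lsmul A (M ⊗[A] T) r) hr (CharacterModule.homEquiv g)
  refine ⟨CharacterModule.homEquiv.symm χ, ?_⟩
  rw [← map_smul, LinearEquiv.symm_apply_eq, ← hχ]
  rfl

/-- Kernels of `f ⊗ T`, for `f` injective, are `m`-power torsion; equivalently all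
`Tor_1(-, T)` are. -/
def TorTorsion (m : Ideal A) (T : Type) [AddCommGroup T] [Module A T] : Prop :=
  ∀ (K F : Type) [AddCommGroup K] [Module A K] [AddCommGroup F] [Module A F] (f : K →ₗ[A] F),
    Function.Injective f → ∀ τ : K ⊗[A] T, f.rTensor T τ = 0 → ∀ r ∈ m, ∃ k : ℕ, r ^ k • τ = 0

lemma uncurry_comp {K F : Type} [AddCommGroup K] [Module A K] [AddCommGroup F] [Module A F]
    (f : K →ₗ[A] F) (u : F →ₗ[A] CharacterModule T) (τ : K ⊗[A] T) :
    CharacterModule.uncurry (u ∘ₗ f) τ = CharacterModule.uncurry u (f.rTensor T τ) := by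
  have h : CharacterModule.homEquiv.symm (CharacterModule.dual (f.rTensor T)
      (CharacterModule.homEquiv u)) = u ∘ₗ f := rfl
  rw [LinearEquiv.symm_apply_eq] at h
  exact (DFunLike.congr_fun h τ).symm

lemma extClass_comp_eq_zero {S : ShortComplex (ModuleCat.{0} A)} (hS : S.ShortExact)
    {E : ModuleCat.{0} A} (h : S.X₂ ⟶ E) (g : S.X₁ ⟶ E) (hg : S.f ≫ h = g) :
    hS.extClass.comp (Ext.mk₀ g) (add_zero 1) = 0 := by
  rw [← hg, ← Ext.mk₀_comp_mk₀, hS.extClass_comp_assoc]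

lemma exists_pow_smul {E : Type} [AddCommGroup E] [Module A E] {r : A}
    (h : ∀ y : E, ∃ z, r • z = y) (k : ℕ) (y : E) : ∃ z, r ^ k • z = y := by
  induction k generalizing y with
  | zero => exact ⟨y, by simp⟩
  | succ k ih =>
    obtain ⟨z, hz⟩ := ih y
    obtain ⟨w, hw⟩ := h z
    exact ⟨w, by rw [pow_succ, mul_smul, hw, hz]⟩

/-- A divisible `Ext^s(M, T^*)` vanishes: it is dual to the torsion module `Tor_s(M, T)`. -/
lemma ext_eq_zero_of_divisible {m : Ideal A} (hG : TorTorsion m T) {r : A} (hr : r ∈ m) {s : ℕ}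
    (M : ModuleCat.{0} A) (h : ∀ y : Ext M (charMod A T) (s + 1), ∃ z, r • z = y) :
    Subsingleton (Ext M (charMod A T) (s + 1)) := by
  induction s generalizing M with
  | zero =>
    have hS := M.shortExact_projectiveShortComplex
    set S := M.projectiveShortComplex with hSdef
    have : Projective S.X₂ := ModuleCat.projective_of_free (Module.Free.chooseBasis A S.X₂)
    refine subsingleton_of_forall_eq 0 fun y => ?_
    have key : ∀ y : Ext M (charMod A T) 1, ∃ g : S.X₁ ⟶ charMod A T,
        hS.extClass.comp (Ext.mk₀ g) (add_zero 1) = y := by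
      intro y
      obtain ⟨z, hz⟩ := precomp_extClass_surjective_of_projective_X₂ (charMod A T) hS 0 y
      obtain ⟨g, rfl⟩ := (Ext.mk₀_bijective _ _).2 z
      exact ⟨g, hz⟩
    obtain ⟨g, rfl⟩ := key y
    obtain ⟨h', hh'⟩ : ∃ h : S.X₂ →ₗ[A] CharacterModule T, h ∘ₗ S.f.hom = g.hom := by
      refine exists_extension S.f.hom g.hom fun τ hτ => ?_
      obtain ⟨k, hk⟩ := hG S.X₁ S.X₂ S.f.hom ((ModuleCat.mono_iff_injective _).mp hS.mono_f) τ hτ r hr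
      obtain ⟨z, hz⟩ := exists_pow_smul h k (hS.extClass.comp (Ext.mk₀ g) (add_zero 1))
      obtain ⟨g', rfl⟩ := key z
      have h0 : hS.extClass.comp (Ext.mk₀ (g + (-r ^ k) • g')) (add_zero 1) = 0 := by
        rw [Ext.mk₀_add, Ext.comp_add, Ext.mk₀_smul, Ext.comp_smul, neg_smul, hz, add_neg_cancel]
      obtain ⟨u, hu⟩ := Ext.contravariant_sequence_exact₁ hS (charMod A T) _ (add_zero 1) h0
      obtain ⟨u, rfl⟩ := (Ext.mk₀_bijective _ _).2 u
      rw [Ext.mk₀_comp_mk₀] at hu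
      have hu' := (Ext.mk₀_bijective _ _).1 hu
      have hg : g.hom = r ^ k • g'.hom + u.hom ∘ₗ S.f.hom := by
        have : g = r ^ k • g' + S.f ≫ u := by rw [hu', neg_smul]; abel
        rw [this]; rfl
      have e1 : CharacterModule.uncurry (r ^ k • g'.hom) τ
          = CharacterModule.uncurry g'.hom (r ^ k • τ) := by rw [map_smul]; rfl
      rw [hg, map_add]
      have e3 : (CharacterModule.uncurry (r ^ k • g'.hom) + CharacterModule.uncurry (u.hom ∘ₗ S.f.hom)) τ
         = CharacterModule.uncurry (r ^ k • g'.hom) τ + CharacterModule.uncurry (u.hom ∘ₗ S.f.hom) τ := rfl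
      rw [e3, e1, uncurry_comp, hk, hτ, map_zero, map_zero, add_zero]
    exact extClass_comp_eq_zero hS (ModuleCat.ofHom h') g (ModuleCat.hom_ext hh')
  | succ s ih =>
    have hS := M.shortExact_projectiveShortComplex
    set S := M.projectiveShortComplex with hSdef
    have : Projective S.X₂ := ModuleCat.projective_of_free (Module.Free.chooseBasis A S.X₂)
    have key : ∀ y : Ext M (charMod A T) (s + 1 + 1), ∃ z : Ext S.X₁ (charMod A T) (s + 1),
        hS.extClass.comp z (add_comm 1 (s + 1)) = y :=
      precomp_extClass_surjective_of_projective_X₂ (charMod A T) hS (s + 1)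
    have h1 : Subsingleton (Ext S.X₁ (charMod A T) (s + 1)) := by
      refine ih S.X₁ fun w => ?_
      obtain ⟨z, hz⟩ := h (hS.extClass.comp w (add_comm 1 (s + 1)))
      obtain ⟨v, rfl⟩ := key z
      refine ⟨v, ?_⟩
      have h0 : hS.extClass.comp (w + (-r) • v) (add_comm 1 (s + 1)) = 0 := by
        rw [Ext.comp_add, Ext.comp_smul, neg_smul, hz, add_neg_cancel]
      obtain ⟨u, hu⟩ := Ext.contravariant_sequence_exact₁ hS (charMod A T) _ _ h0
      rw [Ext.eq_zero_of_projective u, Ext.comp_zero] at hu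
      rw [neg_smul, ← sub_eq_add_neg] at hu
      exact (sub_eq_zero.mp hu.symm).symm
    refine subsingleton_of_forall_eq 0 fun y => ?_
    obtain ⟨z, rfl⟩ := key y
    rw [Subsingleton.elim z 0, Ext.comp_zero]

/-- `Ext^s(M / (rs) M, T^*) = 0` for `s ≥ 1` if `rs` is regular on `M` and on `M ⊗ T`. -/
lemma ext_quotient_regular (rs : List A) (M : Type) [AddCommGroup M] [Module A M]
    (h1 : IsWeaklyRegular M rs) (h2 : IsWeaklyRegular (M ⊗[A] T) rs)
    (h : ∀ s, Subsingleton (Ext (ModuleCat.of A M) (charMod A T) (s + 1))) (s : ℕ) :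
    Subsingleton (Ext (ModuleCat.of A (M ⧸ (Ideal.ofList rs • ⊤ : Submodule A M)))
      (charMod A T) (s + 1)) := by
  induction rs generalizing M with
  | nil =>
    exact ext_congr _ (Submodule.quotEquivOfEqBot _ (by simp)) (h s)
  | cons r rs ih =>
    rw [isWeaklyRegular_cons_iff] at h1 h2
    refine ext_congr _ (Submodule.quotOfListConsSMulTopEquivQuotSMulTopInner M r rs) ?_
    refine ih (QuotSMulTop r M) h1.2
      (((QuotSMulTop.quotSMulTopTensorEquivQuotSMulTop r T M).isWeaklyRegular_congr rs).mpr h2.2) ?_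
    intro s
    have hS := (show IsSMulRegular (ModuleCat.of A M) r from h1.1).smulShortComplex_shortExact
    cases s with
    | succ s => exact ext_right _ hS (h s) (h (s + 1))
    | zero =>
      refine subsingleton_of_forall_eq 0 fun y => ?_
      have : Subsingleton (Ext ((ModuleCat.of A M).smulShortComplex r).X₂ (charMod A T) 1) := h 0
      obtain ⟨z, rfl⟩ := Ext.contravariant_sequence_exact₃ hS (charMod A T) y
        (Subsingleton.elim _ _) (add_zero 1)
      obtain ⟨g, rfl⟩ := (Ext.mk₀_bijective _ _).2 z
      obtain ⟨g', hg'⟩ := hom_smul_surjective h2.1 g.hom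
      refine extClass_comp_eq_zero hS (ModuleCat.ofHom g') g (ModuleCat.hom_ext ?_)
      rw [← hg']
      exact LinearMap.ext fun a => g'.map_smul r a

lemma baer_of_ext (E : ModuleCat.{0} A)
    (h : ∀ I : Ideal A, Subsingleton (Ext (ModuleCat.of A (A ⧸ I)) E 1)) : Module.Baer A E := by
  intro I g
  have hS := shortExact_of (A := A) I.subtype (Submodule.mkQ I) I.injective_subtype
    (Submodule.mkQ_surjective I) (LinearMap.exact_subtype_mkQ I)
  have h' := h I
  obtain ⟨u, hu⟩ := Ext.contravariant_sequence_exact₁ hS E (Ext.mk₀ (ModuleCat.ofHom g)) (add_zero 1)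
    (h'.elim _ _)
  obtain ⟨u, rfl⟩ := (Ext.mk₀_bijective _ _).2 u
  rw [Ext.mk₀_comp_mk₀] at hu
  have hu' := (Ext.mk₀_bijective _ _).1 hu
  refine ⟨u.hom, fun x hx => ?_⟩
  exact LinearMap.congr_fun (congrArg ModuleCat.Hom.hom hu') ⟨x, hx⟩

end CharExt

end BigCM

/-! ### A flatness criterion -/

namespace BigCM

open CategoryTheory CategoryTheory.Abelian RingTheory.Sequence TensorProduct

/-- If multiplication by `r ^ a` on a finitely generated submodule of `T` factors through a free module,
it kills the part of the kernel of `f ⊗ T` coming from that submodule. -/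
lemma torTorsion_of_freeMult {A T : Type} [CommRing A] [AddCommGroup T] [Module A T]
    {m : Ideal A} (hJ : ∀ N : Submodule A T, N.FG → ∃ a, ∀ c ∈ m ^ a, FreeMult N c) :
    TorTorsion m T := by
  intro K F _ _ _ _ f hf τ hτ r hr
  obtain ⟨P, hP, u, hu⟩ := TensorProduct.exists_of_fg (TensorProduct.comm A K T τ)
  have h1 : (P.subtype.rTensor F) (f.lTensor P u) = 0 := by
    rw [← LinearMap.comp_apply, LinearMap.rTensor_comp_lTensor, ← LinearMap.lTensor_comp_rTensor,
      LinearMap.comp_apply, hu, ← LinearMap.comm_comp_rTensor_comp_comm_eq]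
    simp [hτ]
  obtain ⟨Q, hPQ, hQ, h2⟩ := TensorProduct.eq_zero_of_fg_of_subtype_eq_zero hP h1
  obtain ⟨a, ha⟩ := hJ Q hQ
  obtain ⟨n, φ, ψ, hφ⟩ := ha (r ^ a) (Ideal.pow_mem_pow hr a)
  set v := (Submodule.inclusion hPQ).rTensor K u with hv
  have h3 : f.lTensor Q v = 0 := by
    rw [← h2, hv, ← LinearMap.comp_apply, ← LinearMap.comp_apply, LinearMap.lTensor_comp_rTensor,
      LinearMap.rTensor_comp_lTensor]
  have h4 : φ.rTensor K v = 0 := by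
    apply Module.Flat.lTensor_preserves_injective_linearMap (M := Fin n → A) f hf
    rw [map_zero, ← LinearMap.comp_apply, LinearMap.lTensor_comp_rTensor,
      ← LinearMap.rTensor_comp_lTensor, LinearMap.comp_apply, h3, map_zero]
  have h5 : ψ ∘ₗ φ = r ^ a • Q.subtype := LinearMap.ext hφ
  have h6 : (Q.subtype).rTensor K v = TensorProduct.comm A K T τ := by
    rw [hv, ← hu, ← LinearMap.comp_apply, ← LinearMap.rTensor_comp]; rfl
  refine ⟨a, (TensorProduct.comm A K T).injective ?_⟩
  rw [map_smul, ← h6, ← LinearMap.smul_apply, ← LinearMap.rTensor_smul, ← h5, LinearMap.rTensor_comp,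
    LinearMap.comp_apply, h4, map_zero, map_zero]

/-- A flatness criterion over a local ring of finite projective dimension: `T` is flat if
`Tor_1(-, T)` is torsion supported at the closed point and a maximal regular sequence of `A` is
regular on `T`. -/
lemma flat_of_torTorsion {A T : Type} [CommRing A] [IsLocalRing A] [IsNoetherianRing A]
    [AddCommGroup T] [Module A T] (hG : TorTorsion (IsLocalRing.maximalIdeal A) T)
    (rs : List A) (h1 : IsWeaklyRegular A rs) (h2 : IsWeaklyRegular T rs)
    (e : A) (he : e ∉ Ideal.ofList rs)
    (hme : ∀ c ∈ IsLocalRing.maximalIdeal A, c * e ∈ Ideal.ofList rs)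
    (n : ℕ) (hn : ∀ (M : Type) [AddCommGroup M] [Module A M] [Module.Finite A M], ∀ s > n,
      Subsingleton (Ext (ModuleCat.of A M) (charMod A T) s)) : Module.Flat A T := by
  have hA : ∀ s, Subsingleton (Ext (ModuleCat.of A A) (charMod A T) (s + 1)) := fun s => by
    have : Projective (ModuleCat.of A A) := ModuleCat.projective_of_free (Module.Free.chooseBasis A A)
    exact subsingleton_of_forall_eq 0 fun y => Ext.eq_zero_of_projective y
  have hq := ext_quotient_regular (T := T) rs A h1
    (((TensorProduct.lid A T).isWeaklyRegular_congr rs).mpr h2) hA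
  set J : Submodule A A := Ideal.ofList rs • ⊤ with hJdef
  have hJ : J = Ideal.ofList rs := by rw [hJdef, smul_eq_mul, Ideal.mul_top]
  let f : (A ⧸ IsLocalRing.maximalIdeal A) →ₗ[A] (A ⧸ J) :=
    Submodule.liftQ _ (LinearMap.toSpanSingleton A (A ⧸ J) (Submodule.Quotient.mk e)) (by
      intro c hc
      rw [LinearMap.mem_ker, LinearMap.toSpanSingleton_apply, ← Submodule.Quotient.mk_smul,
        Submodule.Quotient.mk_eq_zero, hJ]
      exact hme c hc)
  have hf : Function.Injective f := by
    rw [← LinearMap.ker_eq_bot]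
    refine Submodule.ker_liftQ_eq_bot _ _ _ ?_
    intro c hc
    rw [LinearMap.mem_ker, LinearMap.toSpanSingleton_apply, ← Submodule.Quotient.mk_smul,
      Submodule.Quotient.mk_eq_zero, hJ] at hc
    by_contra hcm
    have hu : IsUnit c := by simpa using hcm
    exact he ((Ideal.unit_mul_mem_iff_mem _ hu).mp hc)
  have hS := shortExact_of f (Submodule.mkQ (LinearMap.range f)) hf (Submodule.mkQ_surjective _)
    (LinearMap.exact_map_mkQ_range f)
  have step : ∀ s₀, (∀ (M : Type) [AddCommGroup M] [Module A M] [Module.Finite A M], ∀ s > s₀ + 1,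
      Subsingleton (Ext (ModuleCat.of A M) (charMod A T) s)) →
      ∀ (M : Type) [AddCommGroup M] [Module A M] [Module.Finite A M], ∀ s > s₀,
      Subsingleton (Ext (ModuleCat.of A M) (charMod A T) s) := by
    intro s₀ h M _ _ _ s hs
    refine ext_vanish_of_residue (charMod A T) (s₀ + 1) ?_ ?_ M s hs
    · intro s hs
      rcases hs.lt_or_eq with hs | rfl
      · exact h _ s hs
      · exact ext_left _ hS (hq s₀) (h _ (s₀ + 1 + 1) (Nat.lt_succ_self _))
    · intro r hr s hs M _ hM
      obtain ⟨s, rfl⟩ : ∃ s', s = s' + 1 := ⟨s - 1, by omega⟩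
      exact ext_eq_zero_of_divisible hG hr M hM
  have hall : ∀ (M : Type) [AddCommGroup M] [Module A M] [Module.Finite A M], ∀ s > 0,
      Subsingleton (Ext (ModuleCat.of A M) (charMod A T) s) := by
    clear hS hf
    induction n with
    | zero => exact hn
    | succ n ih => exact ih (step n hn)
  exact Module.Flat.iff_characterModule_baer.mpr
    (baer_of_ext (charMod A T) fun I => hall (A ⧸ I) 1 one_pos)

lemma isWeaklyRegular_of_powReg {A T : Type} [CommRing A] [AddCommGroup T] [Module A T] {n : ℕ}
    {x : Fin n → A} (h : PowReg x T) : IsWeaklyRegular T (List.ofFn x) := by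
  rw [isWeaklyRegular_iff]
  intro i hi
  have hi' : i < n := by simpa using hi
  rw [isSMulRegular_iff_right_eq_zero_of_smul]
  intro w hw
  obtain ⟨w, rfl⟩ := Submodule.Quotient.mk_surjective _ w
  rw [← Submodule.Quotient.mk_smul, Submodule.Quotient.mk_eq_zero] at hw
  rw [Submodule.Quotient.mk_eq_zero]
  have e : Ideal.ofList ((List.ofFn x).take i) =
      Ideal.ofList ((Finset.univ.filter fun j : Fin n => (j : ℕ) < i).toList.map x) := by
    unfold Ideal.ofList
    congr 1
    ext a
    simp only [List.mem_take_iff_getElem, List.getElem_ofFn, List.length_ofFn, Set.mem_ofPred_eq,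
      List.mem_map, Finset.mem_toList, Finset.mem_filter, Finset.mem_univ, true_and]
    constructor
    · rintro ⟨j, hj, rfl⟩
      exact ⟨⟨j, by omega⟩, by simp; omega, rfl⟩
    · rintro ⟨j, hj, rfl⟩
      exact ⟨j, by have := j.2; omega, rfl⟩
  rw [e, ← parSum_one] at hw ⊢
  refine h _ ⟨i, hi'⟩ (by simp) _ w ?_
  simpa using hw

end BigCM

/-! ### Flatness of the integral closure over a regular local ring -/

namespace BigCM

open CategoryTheory CategoryTheory.Abelian RingTheory.Sequence TensorProduct

section FreeMultIdeal

variable {A M : Type} [CommRing A] [AddCommGroup M] [Module A M]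

/-- The ideal of free multipliers of `N`. -/
def freeMultIdeal (N : Submodule A M) : Ideal A where
  carrier := {c | FreeMult N c}
  zero_mem' := ⟨0, 0, 0, fun w => by simp⟩
  add_mem' := by
    rintro c c' ⟨n, φ, ψ, h⟩ ⟨n', φ', ψ', h'⟩
    let e : (Fin (n + n') → A) ≃ₗ[A] (Fin n → A) × (Fin n' → A) :=
      LinearEquiv.funCongrLeft A A finSumFinEquiv ≪≫ₗ
        LinearEquiv.sumArrowLequivProdArrow (Fin n) (Fin n') A A
    refine ⟨n + n', e.symm.toLinearMap ∘ₗ φ.prod φ', ψ.coprod ψ' ∘ₗ e.toLinearMap, fun w => ?_⟩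
    simp [h, h', add_smul]
  smul_mem' := by
    rintro r c ⟨n, φ, ψ, h⟩
    exact ⟨n, φ, r • ψ, fun w => by simp [h, mul_smul]⟩

/-- The ideal of free multipliers contains a power of the maximal ideal as soon as no other prime
contains it. -/
lemma exists_pow_freeMult [IsLocalRing A] [IsNoetherianRing A] (N : Submodule A M)
    (h : ∀ P : Ideal A, P.IsPrime → P ≠ IsLocalRing.maximalIdeal A → ∃ c ∉ P, FreeMult N c) :
    ∃ a, ∀ c ∈ IsLocalRing.maximalIdeal A ^ a, FreeMult N c := by
  have hle : IsLocalRing.maximalIdeal A ≤ (freeMultIdeal N).radical := by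
    rw [Ideal.radical_eq_sInf]
    refine le_sInf ?_
    rintro P ⟨hP, hPp⟩
    by_contra hne
    obtain ⟨c, hc, hcf⟩ := h P hPp (fun h => hne h.ge)
    exact hc (hP hcf)
  obtain ⟨a, ha⟩ := Ideal.exists_pow_le_of_le_radical_of_fg hle (IsNoetherian.noetherian _)
  exact ⟨a, fun c hc => ha hc⟩

end FreeMultIdeal

/-- If the integral closure `T_P` of `B = A_P` is flat, then by Lazard the inclusion `N → T_P` of a
finitely presented module factors through a finite free module; clearing denominators turns this into
a free multiplier outside `P`. -/
lemma exists_freeMult_of_flat_localization {A B Ω : Type} [CommRing A] [IsNoetherianRing A]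
    [CommRing B] [Field Ω] [Algebra A B] [Algebra A Ω] [Algebra B Ω] [IsScalarTower A B Ω]
    (P : Ideal A) [P.IsPrime] [IsLocalization.AtPrime B P]
    [Module.Flat B (integralClosure B Ω)] (N : Submodule A (integralClosure A Ω)) (hN : N.FG) :
    ∃ c ∉ P, FreeMult N c := by
  have : Module.Flat A B := IsLocalization.flat B P.primeCompl
  have : Module.Flat A (integralClosure B Ω) := Module.Flat.trans A B _
  have hfin : Module.Finite A N := Module.Finite.of_fg hN
  have : Module.FinitePresentation A N := Module.finitePresentation_of_finite A N
  let ι : N →ₗ[A] integralClosure B Ω :=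
    { toFun := fun w => ⟨(w : integralClosure A Ω), IsIntegral.tower_top (w : integralClosure A Ω).2⟩
      map_add' := fun _ _ => rfl
      map_smul' := fun _ _ => rfl }
  obtain ⟨k, φ, ψ, hψ⟩ := Module.Flat.exists_factorization_of_finitePresentation ι
  have hm : ∀ j : Fin k, ∃ m : P.primeCompl, IsIntegral A (m • (ψ (Finsupp.single j 1) : Ω)) :=
    fun j => IsIntegral.exists_multiple_integral_of_isLocalization (Rₘ := B) P.primeCompl _
      (ψ (Finsupp.single j 1)).2
  choose m hm using hm
  let c : P.primeCompl := ∏ j, m j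
  have hc : ∀ j, IsIntegral A ((c : A) • (ψ (Finsupp.single j 1) : Ω)) := by
    intro j
    have : (c : A) = (∏ i ∈ Finset.univ.erase j, (m i : A)) * m j := by
      rw [Finset.prod_erase_mul _ _ (Finset.mem_univ j)]
      simp [c]
    rw [this, mul_smul]
    exact (hm j).smul _
  refine ⟨c, c.2, k, (Finsupp.linearEquivFunOnFinite A A (Fin k)).toLinearMap ∘ₗ φ,
    Fintype.linearCombination A fun j => (⟨_, hc j⟩ : integralClosure A Ω), fun w => ?_⟩
  apply Subtype.ext
  have h1 : ((w : integralClosure A Ω) : Ω) = ψ (φ w) := by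
    have := congrArg (Subtype.val) (LinearMap.congr_fun hψ w)
    exact this
  have h2 : φ w = ∑ j, (φ w j) • Finsupp.single j (1 : A) := by
    rw [← Finsupp.univ_sum_single (φ w)]
    simp
  rw [Fintype.linearCombination_apply]
  have h3 : ((ψ (φ w) : integralClosure B Ω) : Ω) = ∑ j, (φ w j) • (ψ (Finsupp.single j 1) : Ω) := by
    conv_lhs => rw [h2]
    rw [map_sum, AddSubmonoidClass.coe_finsetSum]
    simp only [map_smul]
    rfl
  rw [AddSubmonoidClass.coe_finsetSum]
  change _ = (c : A) • ((w : integralClosure A Ω) : Ω)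
  rw [h1, h3, Finset.smul_sum]
  refine Finset.sum_congr rfl fun j _ => ?_
  change (φ w j) • ((c : A) • (ψ (Finsupp.single j 1) : Ω)) = _
  rw [smul_comm]

/-- Projective dimension bounds for finite modules pass to localizations, as every
finite module over `A_P` is the localization of a finite `A`-module. -/
lemma hasProjectiveDimensionLE_localization {A : Type} [CommRing A] (S : Submonoid A) (n : ℕ)
    (h : ∀ (M : ModuleCat.{0} A) [Module.Finite A M], HasProjectiveDimensionLE M n)
    (M : ModuleCat.{0} (Localization S)) [Module.Finite (Localization S) M] :
    HasProjectiveDimensionLE M n := by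
  let B := Localization S
  let : Module A M := Module.compHom M (algebraMap A B)
  have : IsScalarTower A B M := IsScalarTower.of_algebraMap_smul fun r x => rfl
  have := isLocalizedModule_id S M B
  obtain ⟨G, hG⟩ := (Module.Finite.fg_top : (⊤ : Submodule B M).FG)
  let N : Submodule A M := Submodule.span A (G : Set M)
  have hN : N.FG := ⟨G, rfl⟩
  have hNf : Module.Finite A N := Module.Finite.of_fg hN
  have htop : N.localized' B S (LinearMap.id : M →ₗ[A] M) = ⊤ := by
    rw [eq_top_iff, ← hG, Submodule.span_le]
    intro x hx
    rw [SetLike.mem_coe, Submodule.mem_localized']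
    exact ⟨x, Submodule.subset_span hx, 1, by simp⟩
  have := h (ModuleCat.of A N)
  have h1 := (ModuleCat.of A N).localizedModule_hasProjectiveDimensionLE n S
  have hloc := (ModuleCat.of A N).localizedModule_isLocalizedModule S
  let e1 := IsLocalizedModule.linearEquiv S ((ModuleCat.of A N).localizedModuleMkLinearMap S)
    (N.toLocalized' B S (LinearMap.id : M →ₗ[A] M))
  let e2 := LinearEquiv.extendScalarsOfIsLocalization S B e1
  let e3 := e2 ≪≫ₗ LinearEquiv.ofTop _ htop
  exact ModuleCat.hasProjectiveDimensionLE_of_linearEquiv e3 n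

/-- The integral closure of `A` in an algebraically closed field of characteristic `p` is flat over
a local domain `A` of finite global dimension. -/
theorem flat_integralClosure (p : ℕ) [Fact p.Prime] (Ω : Type) [Field Ω] [IsAlgClosed Ω] [CharP Ω p]
    (n : ℕ) (A : Type) [CommRing A] [IsLocalRing A] [IsNoetherianRing A] [IsDomain A] [Algebra A Ω]
    (hinj : Function.Injective (algebraMap A Ω)) (hdim : ringKrullDim A < n)
    (N : ℕ) (hpd : ∀ (M : ModuleCat.{0} A) [Module.Finite A M], HasProjectiveDimensionLE M N) :
    Module.Flat A (integralClosure A Ω) := by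
  induction n generalizing A with
  | zero => exact absurd hdim (not_lt.mpr ringKrullDim_nonneg_of_nontrivial)
  | succ n ih =>
    have hJ : ∀ L : Submodule A (integralClosure A Ω), L.FG →
        ∃ a, ∀ c ∈ IsLocalRing.maximalIdeal A ^ a, FreeMult L c := by
      refine fun L hL => exists_pow_freeMult L fun P hP hPm => ?_
      let B := Localization.AtPrime P
      have hunit : ∀ y : P.primeCompl, IsUnit (algebraMap A Ω y) := by
        intro y
        refine IsUnit.mk0 _ fun h => y.2 ?_
        rw [(injective_iff_map_eq_zero _).mp hinj _ h]
        exact P.zero_mem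
      let : Algebra B Ω := (IsLocalization.lift (S := B) hunit).toAlgebra
      have : IsScalarTower A B Ω := IsScalarTower.of_algebraMap_eq fun a =>
        (IsLocalization.lift_eq hunit a).symm
      have : IsDomain B := IsLocalization.isDomain_localization
        P.primeCompl_le_nonZeroDivisors
      have : IsNoetherianRing B := IsLocalization.isNoetherianRing P.primeCompl B inferInstance
      have hB : Function.Injective (algebraMap B Ω) := by
        rw [injective_iff_map_eq_zero]
        intro b hb
        obtain ⟨a, s, rfl⟩ := IsLocalization.exists_mk'_eq P.primeCompl b
        have h0 : algebraMap B Ω (algebraMap A B a) = 0 := by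
          rw [← IsLocalization.mk'_spec B a s, map_mul, hb, zero_mul]
        rw [← IsScalarTower.algebraMap_apply] at h0
        rw [(injective_iff_map_eq_zero _).mp hinj _ h0, IsLocalization.mk'_zero]
      have hdB : ringKrullDim B < n := by
        rw [IsLocalization.AtPrime.ringKrullDim_eq_height P B]
        have hlt : P.height < (IsLocalRing.maximalIdeal A).height :=
          Ideal.height_strict_mono_of_isPrime_of_isPrime
            (lt_of_le_of_ne (IsLocalRing.le_maximalIdeal hP.ne_top) hPm)
        rw [← IsLocalRing.maximalIdeal_height_eq_ringKrullDim] at hdim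
        have h1 : (IsLocalRing.maximalIdeal A).height < ((n + 1 : ℕ) : ℕ∞) := by exact_mod_cast hdim
        have h2 : P.height < (n : ℕ∞) :=
          hlt.trans_le (ENat.lt_natCast_add_one_iff.mp (by exact_mod_cast h1))
        exact_mod_cast h2
      have := ih B hB hdB (hasProjectiveDimensionLE_localization P.primeCompl N hpd)
      exact exists_freeMult_of_flat_localization (B := B) P L hL
    obtain ⟨rs, hrm, hrs, e, he, hme⟩ := exists_maximal_regular A
    have hof : List.ofFn rs.get = rs := List.ofFn_get rs
    have hxA : PowReg rs.get A := powReg_of_isWeaklyRegular (fun i => hrm _ (rs.get_mem i))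
      (by rwa [hof])
    have hinj' : Function.Injective (algebraMap A (integralClosure A Ω)) := fun a b hab =>
      hinj (congrArg Subtype.val hab)
    have hx0 : ∀ i, algebraMap A (integralClosure A Ω) (rs.get i) ≠ 0 := by
      intro i hi
      have h0 : rs.get i = 0 := (injective_iff_map_eq_zero _).mp hinj' _ hi
      have := hxA ∅ i (by simp) 0 1 (by rw [h0, zero_smul]; exact zero_mem _)
      rw [mem_parSum] at this
      simp at this
    have : CharP (integralClosure A Ω) p :=
      (algebraMap (integralClosure A Ω) Ω).charP Subtype.val_injective p
    have hxT := powReg_of_freeMult (absClosed_integralClosure A Ω) p hxA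
      (fun i => hrm _ (rs.get_mem i)) hx0 hJ
    refine flat_of_torTorsion (torTorsion_of_freeMult hJ) rs hrs
      (by simpa only [hof] using isWeaklyRegular_of_powReg hxT) e he hme N ?_
    intro M _ _ hM s hs
    have := hpd (ModuleCat.of A M)
    exact HasProjectiveDimensionLT.subsingleton _ (N + 1) s hs _

end BigCM

/-! ### Lifting fields of characteristic p along square-zero extensions -/

namespace BigCM

section Lifting

variable {p : ℕ} [hp : Fact p.Prime] {K S S' : Type} [CommRing S'] [CommRing S] [Field K]

/-- A partial lift of `f : K → S` along `π : S' → S`, encoded as the graph of a ring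
homomorphism from a subring of `K` to `S'`, required to contain the canonical lifts
`a ^ p ↦ β ^ p` of `p`-th powers. -/
structure IsPartialLift (p : ℕ) (π : S' →+* S) (f : K →+* S) (Γ : Subring (K × S')) : Prop where
  lift : ∀ z ∈ Γ, π z.2 = f z.1
  inj : ∀ z ∈ Γ, z.1 = 0 → z = 0
  pow_mem : ∀ z : K × S', π z.2 = f z.1 → z ^ p ∈ Γ

/-- The inverse of `a` is `a ^ (p - 1)` times the canonical lift of `(a⁻¹) ^ p`. -/
theorem IsPartialLift.isField {π : S' →+* S} (hπ : Function.Surjective π) {f : K →+* S}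
    {Γ : Subring (K × S')} (h : IsPartialLift p π f Γ) : IsField Γ := by
  refine ⟨⟨0, 1, ?_⟩, mul_comm, ?_⟩
  · intro h01
    have := congrArg (fun z : Γ => z.1.1) h01
    simp at this
  · intro a ha
    have ha1 : a.1.1 ≠ 0 := fun h0 => ha (Subtype.ext (h.inj _ a.2 h0))
    obtain ⟨β, hβ⟩ := hπ (f (a.1.1)⁻¹)
    have hb := h.pow_mem ((a.1.1)⁻¹, β) hβ
    refine ⟨a ^ (p - 1) * ⟨_, hb⟩, ?_⟩
    rw [← sub_eq_zero]
    refine Subtype.ext (h.inj _ (Subtype.property _) ?_)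
    have : a.1.1 * (a.1.1 ^ (p - 1) * (a.1.1⁻¹) ^ p) = 1 := by
      rw [← mul_assoc, ← pow_succ', Nat.sub_add_cancel hp.out.one_le, ← mul_pow,
        mul_inv_cancel₀ ha1, one_pow]
    exact sub_eq_zero.2 this

/-- The lift `a ^ p ↦ β ^ p`, for any `β` over `f a`, is well defined: two choices of `β` differ by an
element of square zero, and Frobenius kills it. -/
theorem exists_initial_lift [CharP K p] [CharP S' p] (π : S' →+* S) (f : K →+* S)
    (hker : ∀ s, π s = 0 → s * s = 0) : ∃ Γ, IsPartialLift p π f Γ := by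
  let P : Subring (K × S') :=
    RingHom.eqLocus (π.comp (RingHom.snd K S')) (f.comp (RingHom.fst K S'))
  have hP : ∀ z, z ∈ P ↔ π z.2 = f z.1 := fun z => Iff.rfl
  have : CharP (K × S') p := ⟨fun n => by simp [Prod.ext_iff, CharP.cast_eq_zero_iff _ p]⟩
  refine ⟨P.map (frobenius (K × S') p), ?_, ?_, ?_⟩
  · rintro _ ⟨z, hz, rfl⟩
    have := (hP z).1 hz
    simp [frobenius_def, this]
  · rintro _ ⟨z, hz, rfl⟩ h0
    have hz' := (hP z).1 hz
    have h1 : z.1 = 0 := by simpa [frobenius_def, hp.out.ne_zero] using h0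
    have h2 : z.2 * z.2 = 0 := hker _ (by rw [hz', h1, map_zero])
    have h3 : z.2 ^ p = 0 := by
      rw [← Nat.sub_add_cancel hp.out.two_le, pow_add, pow_two, h2, mul_zero]
    ext <;> simp [frobenius_def, h1, h3, hp.out.ne_zero]
  · intro z hz
    exact ⟨z, hz, rfl⟩

/-- A partial lift extends to one more element `b`, sent to any `β` over `f b`: the polynomial
`X ^ p - b ^ p` is irreducible over the domain of the lift, so it generates all relations of `b`,
and `β` satisfies it. -/
theorem IsPartialLift.exists_extend [CharP K p] {π : S' →+* S} (hπ : Function.Surjective π) {f : K →+* S}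
    {Γ : Subring (K × S')} (h : IsPartialLift p π f Γ) (b : K) (hb : ∀ z ∈ Γ, z.1 ≠ b) :
    ∃ Γ', IsPartialLift p π f Γ' ∧ Γ ≤ Γ' ∧ ∃ z ∈ Γ', z.1 = b := by
  obtain ⟨β, hβ⟩ := hπ (f b)
  let B : K × S' := (b, β)
  let _ : Field Γ := (h.isField hπ).toField
  have hγ : B ^ p ∈ Γ := h.pow_mem B hβ
  have hirr : Irreducible (Polynomial.X ^ p - Polynomial.C (⟨B ^ p, hγ⟩ : Γ)) := by
    refine X_pow_sub_C_irreducible_of_prime hp.out fun δ hδ => hb _ δ.2 ?_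
    have : δ.1.1 ^ p = b ^ p := by
      have := congrArg (fun z : Γ => z.1.1) hδ
      simpa [B] using this
    exact frobenius_inj K p this
  let e : Polynomial Γ →+* K × S' := Polynomial.eval₂RingHom Γ.subtype B
  have heX : e Polynomial.X = B := by simp [e]
  have heC : ∀ z : Γ, e (Polynomial.C z) = z := fun z => by simp [e]
  let e₁ : Polynomial Γ →+* K := (RingHom.fst K S').comp e
  refine ⟨e.range, ⟨?_, ?_, ?_⟩, ?_, B, ⟨Polynomial.X, heX⟩, rfl⟩
  · rintro _ ⟨Q, rfl⟩
    suffices ((π.comp (RingHom.snd K S')).comp e) = ((f.comp (RingHom.fst K S')).comp e) from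
      congrArg (fun g : Polynomial Γ →+* S => g Q) this
    refine Polynomial.ringHom_ext (fun z => ?_) ?_
    · simpa [heC] using h.lift _ z.2
    · simpa [heX] using hβ
  · rintro _ ⟨Q, rfl⟩ hQ
    have hd : (Polynomial.X ^ p - Polynomial.C (⟨B ^ p, hγ⟩ : Γ)) ∣ Q := by
      by_contra hnd
      obtain ⟨u, v, huv⟩ := (hirr.coprime_iff_not_dvd.2 hnd : IsCoprime _ Q)
      have := congrArg e₁ huv
      have h2 : e₁ Q = 0 := hQ
      have h3 : e₁ (Polynomial.X ^ p - Polynomial.C (⟨B ^ p, hγ⟩ : Γ)) = 0 := by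
        simp only [e₁, RingHom.comp_apply, map_sub, map_pow, heX, heC]
        simp
      rw [map_add, map_mul, map_mul, h2, h3] at this
      simp at this
    obtain ⟨W, rfl⟩ := hd
    rw [map_mul, map_sub, map_pow, heX, heC, sub_self, zero_mul]
  · intro z hz
    exact ⟨Polynomial.C ⟨_, h.pow_mem z hz⟩, heC _⟩
  · intro z hz
    exact ⟨Polynomial.C ⟨z, hz⟩, heC _⟩

/-- Fields of characteristic `p` are formally smooth over the prime field, in the form of
lifting along square-zero surjections of rings of characteristic `p`. -/
theorem exists_lift_of_sq_zero (p : ℕ) [hp : Fact p.Prime] [CharP K p] [CharP S' p]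
    (π : S' →+* S) (hπ : Function.Surjective π)
    (f : K →+* S) (hker : ∀ s, π s = 0 → s * s = 0) : ∃ g : K →+* S', π.comp g = f := by
  obtain ⟨Γ₀, h₀⟩ := exists_initial_lift (p := p) π f hker
  obtain ⟨Γ, -, hΓ⟩ := zorn_le_nonempty₀ {Γ | IsPartialLift p π f Γ} (fun c hc hchain y hy => by
    have hne : c.Nonempty := ⟨y, hy⟩
    have hmem := fun z => Subring.mem_sSup_of_directedOn (x := z) hne hchain.directedOn
    refine ⟨sSup c, ⟨?_, ?_, ?_⟩, fun z hz => le_sSup hz⟩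
    · intro z hz
      obtain ⟨s, hs, hzs⟩ := (hmem z).1 hz
      exact (hc hs).lift z hzs
    · intro z hz
      obtain ⟨s, hs, hzs⟩ := (hmem z).1 hz
      exact (hc hs).inj z hzs
    · intro z hz
      exact (hmem _).2 ⟨y, hy, (hc hy).pow_mem z hz⟩) Γ₀ h₀
  have hsurj : ∀ b : K, ∃ z ∈ Γ, z.1 = b := by
    intro b
    by_contra hb
    push Not at hb
    obtain ⟨Γ', h', hle, z, hz, hzb⟩ := hΓ.prop.exists_extend hπ b hb
    exact hb z (hΓ.le_of_ge h' hle hz) hzb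
  let q : Γ →+* K := (RingHom.fst K S').comp Γ.subtype
  have hq : Function.Bijective q := by
    refine ⟨(injective_iff_map_eq_zero q).2 fun z hz => Subtype.ext (hΓ.prop.inj _ z.2 hz), ?_⟩
    intro b
    obtain ⟨z, hz, hzb⟩ := hsurj b
    exact ⟨⟨z, hz⟩, hzb⟩
  let E := RingEquiv.ofBijective q hq
  refine ⟨((RingHom.snd K S').comp Γ.subtype).comp E.symm.toRingHom, ?_⟩
  ext a
  have h1 := hΓ.prop.lift _ (E.symm a).2
  have h2 : (E.symm a).1.1 = a := E.apply_symm_apply a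
  rw [h2] at h1
  exact h1

end Lifting

end BigCM

/-! ### Coefficient fields -/

namespace BigCM

open IsLocalRing

theorem charP_of_prime_eq_zero {Q : Type} [CommRing Q] [Nontrivial Q] {p : ℕ} (hp : p.Prime)
    (h : (p : Q) = 0) : CharP Q p :=
  CharP.ringChar_of_prime_eq_zero hp h ▸ ringChar.charP Q

/-- Existence of a coefficient field in a complete local ring of characteristic `p`: the
identity of the residue field is lifted successively along `R / m ^ (n + 2) → R / m ^ (n + 1)`. -/
theorem exists_coefficient_field (R : Type) [CommRing R] [IsLocalRing R]
    [IsAdicComplete (maximalIdeal R) R] (p : ℕ) [hp : Fact p.Prime] [CharP R p] :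
    ∃ g : ResidueField R →+* R, (residue R).comp g = RingHom.id _ := by
  have hpR : (p : R) = 0 := CharP.cast_eq_zero R p
  have hpK : CharP (ResidueField R) p := charP_of_prime_eq_zero hp.out (by
    rw [← map_natCast (residue R), hpR, map_zero])
  have hpQ : ∀ n, CharP (R ⧸ maximalIdeal R ^ (n + 1)) p := fun n => by
    have : Nontrivial (R ⧸ maximalIdeal R ^ (n + 1)) := Ideal.Quotient.nontrivial_iff.2 fun h =>
      (maximalIdeal.isMaximal R).ne_top (top_le_iff.1 (h ▸ Ideal.pow_le_self n.succ_ne_zero))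
    exact charP_of_prime_eq_zero hp.out (by
      rw [← map_natCast (Ideal.Quotient.mk _), hpR, map_zero])
  have hstep : ∀ (n : ℕ) (f : ResidueField R →+* R ⧸ maximalIdeal R ^ (n + 1)),
      ∃ g : ResidueField R →+* R ⧸ maximalIdeal R ^ (n + 2),
        (Ideal.Quotient.factorPow (maximalIdeal R) (n + 1).le_succ).comp g = f := by
    intro n f
    have := hpQ (n + 1)
    refine exists_lift_of_sq_zero p _ (Ideal.Quotient.factor_surjective _) f fun s hs => ?_
    obtain ⟨r, rfl⟩ := Ideal.Quotient.mk_surjective s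
    have hr : r ∈ maximalIdeal R ^ (n + 1) := by
      simpa [Ideal.Quotient.eq_zero_iff_mem] using hs
    rw [← map_mul, Ideal.Quotient.eq_zero_iff_mem]
    refine Ideal.pow_le_pow_right (by omega) (?_ : r * r ∈ maximalIdeal R ^ ((n + 1) + (n + 1)))
    rw [pow_add]
    exact Ideal.mul_mem_mul hr hr
  choose s hs using hstep
  let f0 : ResidueField R →+* R ⧸ maximalIdeal R ^ (0 + 1) :=
    Ideal.Quotient.factor (by simp)
  let f : (n : ℕ) → ResidueField R →+* R ⧸ maximalIdeal R ^ (n + 1) := fun n =>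
    Nat.rec f0 (fun n g => s n g) n
  have hmono : StrictMono fun n : ℕ => n + 1 := fun _ _ h => Nat.succ_lt_succ h
  refine ⟨IsAdicComplete.StrictMono.liftRingHom (maximalIdeal R) hmono f
    (fun {m} => hs m (f m)), ?_⟩
  ext a
  have h := IsAdicComplete.StrictMono.mk_liftRingHom (maximalIdeal R) hmono f
    (fun {m} => hs m (f m)) (n := 0) a
  obtain ⟨r, rfl⟩ := residue_surjective a
  have h2 : f 0 (residue R r) = Ideal.Quotient.mk _ r := rfl
  rw [h2] at h
  have h3 := Ideal.Quotient.eq.1 h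
  refine Ideal.Quotient.eq.2 ?_
  simpa using h3

end BigCM

/-! ### Power series rings -/

namespace BigCM

open IsLocalRing RingTheory.Sequence

theorem isWeaklyRegular_ofFn_iff {A M : Type} [CommRing A] [AddCommGroup M] [Module A M] {n : ℕ}
    (x : Fin n → A) : IsWeaklyRegular M (List.ofFn x) ↔ ∀ (k : Fin n) (w : M),
      x k • w ∈ Ideal.span (x '' {i | i < k}) • (⊤ : Submodule A M) →
        w ∈ Ideal.span (x '' {i | i < k}) • (⊤ : Submodule A M) := by
  have e : ∀ k : Fin n, Ideal.ofList ((List.ofFn x).take k) = Ideal.span (x '' {i | i < k}) := by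
    intro k
    unfold Ideal.ofList
    congr 1
    ext a
    simp only [List.mem_take_iff_getElem, List.getElem_ofFn, List.length_ofFn, Set.mem_ofPred_eq,
      Set.mem_image]
    constructor
    · rintro ⟨j, hj, rfl⟩
      exact ⟨⟨j, by omega⟩, Fin.mk_lt_of_lt_val (by omega), rfl⟩
    · rintro ⟨j, hj, rfl⟩
      exact ⟨j, by have := j.2; have := Fin.lt_def.1 hj; omega, rfl⟩
  have key : ∀ k : Fin n,
      IsSMulRegular (M ⧸ (Ideal.ofList ((List.ofFn x).take k) • ⊤ : Submodule A M)) (x k) ↔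
      ∀ w : M, x k • w ∈ Ideal.span (x '' {i | i < k}) • (⊤ : Submodule A M) →
        w ∈ Ideal.span (x '' {i | i < k}) • (⊤ : Submodule A M) := by
    intro k
    rw [isSMulRegular_iff_right_eq_zero_of_smul, e k]
    constructor
    · intro h w hw
      have := h (Submodule.Quotient.mk w)
      rw [← Submodule.Quotient.mk_smul, Submodule.Quotient.mk_eq_zero,
        Submodule.Quotient.mk_eq_zero] at this
      exact this hw
    · intro h w hw
      obtain ⟨w, rfl⟩ := Submodule.Quotient.mk_surjective _ w
      rw [← Submodule.Quotient.mk_smul, Submodule.Quotient.mk_eq_zero] at hw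
      rw [Submodule.Quotient.mk_eq_zero]
      exact h w hw
  rw [isWeaklyRegular_iff]
  constructor
  · intro h k
    have := h k (by simp)
    rw [List.getElem_ofFn] at this
    exact (key k).1 this
  · intro h i hi
    have hi' : i < n := by simpa using hi
    have := (key ⟨i, hi'⟩).2 (h ⟨i, hi'⟩)
    rwa [List.getElem_ofFn]

section PowerSeries

variable {K : Type} [Field K] {d : ℕ}

open MvPowerSeries in
/-- A power series lies in the ideal `(X_i : i ∈ s)` iff each of its monomials involves some `X_i`
with `i ∈ s`. -/
theorem mem_span_X_iff (s : Set (Fin d)) (f : MvPowerSeries (Fin d) K) :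
    f ∈ Ideal.span ((X : Fin d → MvPowerSeries (Fin d) K) '' s) ↔
      ∀ m : Fin d →₀ ℕ, (∀ i ∈ s, m i = 0) → coeff m f = 0 := by
  classical
  constructor
  · intro hf
    induction hf using Submodule.span_induction with
    | mem y hy =>
      obtain ⟨i, hi, rfl⟩ := hy
      intro m hm
      exact X_dvd_iff.1 dvd_rfl m (hm i hi)
    | zero => simp
    | add y z _ _ hy hz => intro m hm; rw [map_add, hy m hm, hz m hm, add_zero]
    | smul a y _ hy =>
      intro m hm
      rw [smul_eq_mul, coeff_mul]
      refine Finset.sum_eq_zero fun q hq => ?_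
      rw [hy q.2 fun i hi => ?_, mul_zero]
      have h1 := DFunLike.congr_fun (Finset.HasAntidiagonal.mem_antidiagonal.1 hq) i
      have h2 := hm i hi
      simp only [Finsupp.add_apply] at h1
      omega
  · intro h
    -- each monomial in the support is assigned to one variable of `s` dividing it
    let c : (Fin d →₀ ℕ) → Option (Fin d) := fun m =>
      if hm : ∃ i ∈ s, m i ≠ 0 then some hm.choose else none
    let g : Fin d → MvPowerSeries (Fin d) K := fun i m => if c m = some i then coeff m f else 0
    have hg : ∀ i m, coeff m (g i) = if c m = some i then coeff m f else 0 := fun _ _ => rfl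
    have hfg : f = ∑ i, g i := by
      ext m
      rw [map_sum]
      simp only [hg]
      by_cases hm : ∃ i ∈ s, m i ≠ 0
      · have : c m = some hm.choose := dif_pos hm
        simp [this]
      · have : c m = none := dif_neg hm
        push Not at hm
        simp [this, h m hm]
    rw [hfg]
    refine Ideal.sum_mem _ fun i _ => ?_
    by_cases hi : i ∈ s
    · refine Ideal.mem_of_dvd _ (X_dvd_iff.2 fun m hm => ?_)
        (Ideal.subset_span (Set.mem_image_of_mem _ hi))
      rw [hg, if_neg]
      intro hc
      by_cases hm' : ∃ i ∈ s, m i ≠ 0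
      · have : c m = some hm'.choose := dif_pos hm'
        rw [this, Option.some.injEq] at hc
        exact hm'.choose_spec.2 (hc ▸ hm)
      · rw [show c m = none from dif_neg hm'] at hc
        simp at hc
    · have : g i = 0 := by
        ext m
        rw [hg, if_neg, map_zero]
        intro hc
        by_cases hm' : ∃ i ∈ s, m i ≠ 0
        · have : c m = some hm'.choose := dif_pos hm'
          rw [this, Option.some.injEq] at hc
          exact hi (hc ▸ hm'.choose_spec.1)
        · rw [show c m = none from dif_neg hm'] at hc
          simp at hc
      rw [this]
      exact zero_mem _

theorem maximalIdeal_mvPowerSeries :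
    maximalIdeal (MvPowerSeries (Fin d) K) =
      Ideal.span (Set.range (MvPowerSeries.X : Fin d → MvPowerSeries (Fin d) K)) := by
  ext f
  rw [← Set.image_univ, mem_span_X_iff, mem_maximalIdeal, mem_nonunits_iff,
    MvPowerSeries.isUnit_iff_constantCoeff, isUnit_iff_ne_zero, not_not]
  constructor
  · intro h m hm
    have : m = 0 := Finsupp.ext fun i => hm i trivial
    rw [this]
    exact h
  · intro h
    exact h 0 (by simp)

theorem isRegular_mvPowerSeries : IsRegular (MvPowerSeries (Fin d) K)
    (List.ofFn (MvPowerSeries.X : Fin d → MvPowerSeries (Fin d) K)) := by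
  refine IsLocalRing.isRegular_iff_isWeaklyRegular_of_subset_maximalIdeal ?_ |>.2 ?_
  · intro r hr
    rw [maximalIdeal_mvPowerSeries]
    exact Ideal.subset_span (List.mem_ofFn.1 hr)
  · rw [isWeaklyRegular_ofFn_iff]
    intro k w hw
    simp only [smul_eq_mul, Ideal.mul_top, mem_span_X_iff] at hw ⊢
    intro m hm
    have := hw (Finsupp.single k 1 + m) fun i hi => by
      have hik : k ≠ i := ne_of_gt hi
      simp [hik, hm i hi]
    rw [MvPowerSeries.X_def, MvPowerSeries.coeff_add_monomial_mul, one_mul] at this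
    exact this

theorem ofList_X_eq_maximalIdeal :
    Ideal.ofList (List.ofFn (MvPowerSeries.X : Fin d → MvPowerSeries (Fin d) K)) =
      maximalIdeal (MvPowerSeries (Fin d) K) := by
  rw [maximalIdeal_mvPowerSeries, Ideal.ofList]
  congr 1
  ext a
  simp

open CategoryTheory in
theorem hasProjectiveDimensionLE_mvPowerSeries (M : ModuleCat.{0} (MvPowerSeries (Fin d) K))
    [Module.Finite (MvPowerSeries (Fin d) K) M] : HasProjectiveDimensionLE M d := by
  have := hasProjectiveDimensionLT_of_regular _ isRegular_mvPowerSeries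
    (ofList_X_eq_maximalIdeal (K := K) (d := d)) M
  simpa using this

theorem ringKrullDim_mvPowerSeries_le : ringKrullDim (MvPowerSeries (Fin d) K) ≤ d := by
  refine (ringKrullDim_le_spanFinrank_maximalIdeal _).trans ?_
  rw [maximalIdeal_mvPowerSeries, Nat.cast_le]
  refine (Submodule.spanFinrank_span_le_ncard_of_finite (Set.finite_range _)).trans ?_
  rw [← Set.image_univ]
  refine (Set.ncard_image_le Set.finite_univ).trans ?_
  simp

end PowerSeries

end BigCM

/-! ### Complete local domains as integral extensions of power series rings -/

namespace BigCM

open IsLocalRing RingTheory.Sequence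

theorem isPrecomplete_pi {A : Type} [CommRing A] (I : Ideal A) [IsPrecomplete I A] (r : ℕ) :
    IsPrecomplete I (Fin r → A) := by
  have key : ∀ (n : ℕ) (u v : Fin r → A),
      u ≡ v [SMOD (I ^ n • ⊤ : Submodule A (Fin r → A))] ↔
        ∀ j, u j ≡ v j [SMOD (I ^ n • ⊤ : Submodule A A)] := by
    intro n u v
    simp only [SModEq.sub_mem]
    constructor
    · intro h j
      have := Submodule.mem_map_of_mem (f := LinearMap.proj (R := A) (φ := fun _ => A) j) h
      rw [Submodule.map_smul''] at this
      exact Submodule.smul_mono le_rfl le_top this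
    · intro h
      rw [pi_eq_sum_univ' (u - v)]
      refine Submodule.sum_mem _ fun j _ => Submodule.smul_mem_smul ?_ trivial
      simpa using h j
  refine ⟨fun f hf => ?_⟩
  have h1 : ∀ j, ∃ L : A, ∀ n, f n j ≡ L [SMOD (I ^ n • ⊤ : Submodule A A)] := fun j =>
    IsPrecomplete.prec ‹_› (f := fun n => f n j) fun {m n} hmn => (key m _ _).1 (hf hmn) j
  choose L hL using h1
  exact ⟨L, fun n => (key n _ _).2 fun j => hL j n⟩

/-- Complete version of Nakayama: a separated module that is finite modulo `I` is finite when
the base is `I`-adically precomplete. -/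
theorem finite_of_precomplete {A N : Type} [CommRing A] [AddCommGroup N] [Module A N]
    (I : Ideal A) [IsPrecomplete I A] [IsHausdorff I N] (G : Submodule A N) (hG : G.FG)
    (h : ⊤ ≤ G ⊔ I • ⊤) : Module.Finite A N := by
  obtain ⟨r, s, hs⟩ := Submodule.fg_iff_exists_fin_generating_family.1 hG
  have := isPrecomplete_pi I r
  refine Module.Finite.of_surjective (Fintype.linearCombination A s)
    (surjective_of_mkQ_comp_surjective (I := I) ?_)
  rw [← LinearMap.range_eq_top, LinearMap.range_comp, Fintype.range_linearCombination, hs,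
    eq_top_iff]
  intro z _
  obtain ⟨z, rfl⟩ := Submodule.mkQ_surjective _ z
  obtain ⟨a, ha, b, hb, rfl⟩ := Submodule.mem_sup.1 (h (trivial : z ∈ ⊤))
  refine ⟨a, ha, ?_⟩
  rw [map_add, left_eq_add]
  simpa using hb

theorem ringKrullDim_le_of_isIntegral {B R : Type} [CommRing B] [CommRing R] (f : B →+* R)
    (hf : f.IsIntegral) : ringKrullDim R ≤ ringKrullDim B := by
  let _ := f.toAlgebra
  refine Order.krullDim_le_of_strictMono (PrimeSpectrum.comap f) fun P Q hPQ => ?_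
  obtain ⟨hle, hnle⟩ := SetLike.lt_iff_le_and_exists.1 (show P.asIdeal < Q.asIdeal from hPQ)
  obtain ⟨z, hzQ, hzP⟩ := hnle
  exact Ideal.comap_lt_comap_of_integral_mem_sdiff hle ⟨hzQ, hzP⟩ (hf z)

section Eval

variable {K R : Type} [Field K] [CommRing R] [IsLocalRing R]

/-- Evaluation of power series at elements of the maximal ideal of a complete local ring. -/
theorem exists_eval [IsAdicComplete (maximalIdeal R) R] (g : K →+* R) {d : ℕ} (x : Fin d → R)
    (hx : ∀ i, x i ∈ maximalIdeal R) :
    ∃ φ : MvPowerSeries (Fin d) K →+* R, (∀ i, φ (MvPowerSeries.X i) = x i) ∧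
      ∀ a, φ (MvPowerSeries.C a) = g a := by
  let _ : WithIdeal R := ⟨maximalIdeal R⟩
  have hI : IsAdic (maximalIdeal R) := rfl
  obtain ⟨_, _⟩ := (hI.isAdicComplete_iff).1 inferInstance
  let _ : UniformSpace K := ⊥
  have : DiscreteTopology K := ⟨rfl⟩
  have hg : Continuous g := continuous_of_discreteTopology
  have he : MvPowerSeries.HasEval x := by
    refine ⟨fun i => ?_, ?_⟩
    · refine (hI.hasBasis_nhds_zero).tendsto_right_iff.2 fun n _ => ?_
      filter_upwards [Filter.eventually_ge_atTop n] with k hk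
      exact Ideal.pow_le_pow_right hk (Ideal.pow_mem_pow (hx i) k)
    · rw [Filter.cofinite_eq_bot]
      exact Filter.tendsto_bot
  refine ⟨MvPowerSeries.eval₂Hom hg he, fun i => ?_, fun a => ?_⟩
  · rw [MvPowerSeries.coe_eval₂Hom, MvPowerSeries.eval₂_X]
  · rw [MvPowerSeries.coe_eval₂Hom, MvPowerSeries.eval₂_C]

/-- Over a ring containing a coefficient field, `R / m ^ n` is a finite module. -/
theorem exists_fg_sup_pow [IsNoetherianRing R] {A : Type} [CommRing A] [Algebra A R]
    (hA : ∀ r : R, ∃ a : A, r - algebraMap A R a ∈ maximalIdeal R) (n : ℕ) :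
    ∃ G : Submodule A R, G.FG ∧ ⊤ ≤ G ⊔ (maximalIdeal R ^ n).restrictScalars A := by
  induction n with
  | zero => exact ⟨⊥, Submodule.fg_bot, by simp⟩
  | succ n ih =>
    obtain ⟨G, hG, h⟩ := ih
    obtain ⟨t, ht⟩ := (IsNoetherian.noetherian (maximalIdeal R ^ n) : (maximalIdeal R ^ n).FG)
    refine ⟨G ⊔ Submodule.span A t, hG.sup ⟨t, rfl⟩, h.trans ?_⟩
    rw [sup_assoc]
    refine sup_le_sup_left ?_ _
    intro y hy
    have hy' : y ∈ Submodule.span R (t : Set R) := by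
      rw [ht]
      exact hy
    clear hy
    induction hy' using Submodule.span_induction with
    | mem y hy => exact Submodule.mem_sup_left (Submodule.subset_span hy)
    | zero => exact zero_mem _
    | add y z _ _ hy hz => exact add_mem hy hz
    | smul r y hy0 hy =>
      obtain ⟨a, ha⟩ := hA r
      have : r • y = a • y + (r - algebraMap A R a) * y := by
        rw [smul_eq_mul, Algebra.smul_def]
        ring
      rw [this]
      refine add_mem (Submodule.smul_mem _ a hy) (Submodule.mem_sup_right ?_)
      change _ ∈ maximalIdeal R ^ (n + 1)
      rw [pow_succ']
      exact Ideal.mul_mem_mul ha (ht ▸ hy0)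

/-- Cohen's structure theorem relative to a system of parameters: a complete local domain with a
coefficient field is an integral extension of the power series ring in any system of parameters. -/
theorem exists_finite_injective [IsNoetherianRing R] [IsDomain R]
    [IsAdicComplete (maximalIdeal R) R] (g : ResidueField R →+* R)
    (hg : (residue R).comp g = RingHom.id _) (d : ℕ) (hd : ringKrullDim R = d) (x : Fin d → R)
    (hx : (Ideal.span (Set.range x)).radical = maximalIdeal R) :
    ∃ φ : MvPowerSeries (Fin d) (ResidueField R) →+* R, (∀ i, φ (MvPowerSeries.X i) = x i) ∧
      φ.IsIntegral ∧ Function.Injective φ := by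
  have hle : Ideal.span (Set.range x) ≤ maximalIdeal R := hx ▸ Ideal.le_radical
  obtain ⟨φ, hφX, hφC⟩ := exists_eval g x fun i => hle (Ideal.subset_span ⟨i, rfl⟩)
  let _ := φ.toAlgebra
  let I : Ideal (MvPowerSeries (Fin d) (ResidueField R)) := Ideal.span (Set.range MvPowerSeries.X)
  have hmap : I.map (algebraMap _ R) = Ideal.span (Set.range x) := by
    rw [Ideal.map_span, ← Set.range_comp]
    congr 2
    ext i
    exact hφX i
  have hhaus : IsHausdorff I R := by
    rw [← IsHausdorff.map_algebraMap_iff (S := R), hmap]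
    exact IsHausdorff.of_isLocalRing _ _ fun h =>
      (maximalIdeal.isMaximal R).ne_top (top_le_iff.1 (h ▸ hle))
  obtain ⟨n, hn⟩ := Ideal.exists_radical_pow_le_of_fg (Ideal.span (Set.range x))
    (IsNoetherian.noetherian _)
  rw [hx] at hn
  obtain ⟨G, hG, hG'⟩ := exists_fg_sup_pow
    (A := MvPowerSeries (Fin d) (ResidueField R)) (R := R) (fun r =>
      ⟨MvPowerSeries.C (residue R r), by
        change r - φ _ ∈ _
        rw [hφC, ← residue_eq_zero_iff, map_sub]
        exact sub_eq_zero.2 (RingHom.congr_fun hg (residue R r)).symm⟩) n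
  have hfin : Module.Finite (MvPowerSeries (Fin d) (ResidueField R)) R := by
    refine finite_of_precomplete I G hG (hG'.trans (sup_le_sup_left ?_ _))
    rw [Ideal.smul_top_eq_map, hmap]
    exact hn
  have hφint : φ.IsIntegral := (algebraMap_isIntegral_iff.2 inferInstance :
    (algebraMap (MvPowerSeries (Fin d) (ResidueField R)) R).IsIntegral)
  refine ⟨φ, hφX, hφint, (injective_iff_map_eq_zero φ).2 fun r hr => ?_⟩
  by_contra hr0
  -- a nonzero kernel would make the dimension of `R` smaller than `d`
  have h1 := ringKrullDim_quotient_succ_le_of_nonZeroDivisor (mem_nonZeroDivisors_of_ne_zero hr0)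
  let ψ : MvPowerSeries (Fin d) (ResidueField R) ⧸ Ideal.span {r} →+* R :=
    Ideal.Quotient.lift _ φ fun a ha => by
      obtain ⟨c, rfl⟩ := Ideal.mem_span_singleton'.1 ha
      rw [map_mul, hr, mul_zero]
  have hψ : ψ.IsIntegral := RingHom.IsIntegral.tower_top (Ideal.Quotient.mk _) ψ hφint
  have h2 := ringKrullDim_le_of_isIntegral ψ hψ
  have h3 := (add_le_add_left h2 1).trans
    (h1.trans (ringKrullDim_mvPowerSeries_le (K := ResidueField R) (d := d)))
  rw [hd] at h3
  norm_cast at h3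
  omega

end Eval

end BigCM

/-! ### Transfer to the absolute integral closure -/

namespace BigCM

open RingTheory.Sequence

/-- If the integral closure of `A` in `Ω` is flat over `A`, then a regular sequence of `A` stays
regular on the integral closure in `Ω` of any integral extension `R` of `A`: the two integral
closures agree. -/
theorem mem_of_mul_mem_span_of_flat {A R Ω : Type} [CommRing A] [CommRing R] [CommRing Ω]
    [Algebra R Ω] (φ : A →+* R) (hφ : φ.IsIntegral)
    (hflat : letI := ((algebraMap R Ω).comp φ).toAlgebra; Module.Flat A (integralClosure A Ω))
    {d : ℕ} (X : Fin d → A) (hX : IsWeaklyRegular A (List.ofFn X)) (k : Fin d)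
    (y : integralClosure R Ω)
    (hy : y * algebraMap R (integralClosure R Ω) (φ (X k)) ∈
      Ideal.span ((fun i => algebraMap R (integralClosure R Ω) (φ (X i))) '' {i | i < k})) :
    y ∈ Ideal.span ((fun i => algebraMap R (integralClosure R Ω) (φ (X i))) '' {i | i < k}) := by
  let T := integralClosure R Ω
  let _ : Algebra A R := φ.toAlgebra
  let _ : Algebra A Ω := ((algebraMap R Ω).comp φ).toAlgebra
  let _ : Algebra A T := ((algebraMap R T).comp φ).toAlgebra
  have : IsScalarTower A R Ω := IsScalarTower.of_algebraMap_eq fun _ => rfl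
  have : IsScalarTower A R T := IsScalarTower.of_algebraMap_eq fun _ => rfl
  have : IsScalarTower A T Ω := IsScalarTower.of_algebraMap_eq fun _ => rfl
  have : Algebra.IsIntegral A R := ⟨hφ⟩
  have : IsIntegralClosure T A Ω := by
    refine ⟨Subtype.val_injective, fun {z} => ⟨fun hz => ⟨⟨z, hz.tower_top⟩, rfl⟩, ?_⟩⟩
    rintro ⟨y, rfl⟩
    exact isIntegral_trans (R := A) (A := R) _ y.2
  have : Module.Flat A (integralClosure A Ω) := hflat
  have : Module.Flat A T := Module.Flat.of_linearEquiv
    (IsIntegralClosure.equiv A T Ω (integralClosure A Ω)).toLinearEquiv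
  have hreg := IsWeaklyRegular.of_flat (S := T) hX
  rw [List.map_ofFn, isWeaklyRegular_ofFn_iff] at hreg
  have := hreg k y
  simp only [smul_eq_mul, Ideal.mul_top] at this
  exact this (by rwa [mul_comm] at hy)

end BigCM

/-- Let `(R, m)` be a complete Noetherian local domain of Krull dimension
`d` and characteristic `p > 0`. Then the absolute integral closure `R⁺` (the integral
closure of `R` in an algebraic closure of its fraction field) is a big Cohen–Macaulay
algebra: for every system of parameters `x_1,…,x_d` of `R`, the ideal `(x_1,…,x_d)R⁺` is
proper and each `x_k` is a nonzerodivisor on `R⁺/(x_1,…,x_{k-1})R⁺`. -/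
theorem statement12 (R : Type) [CommRing R] [IsLocalRing R] [IsNoetherianRing R] [IsDomain R]
    [IsAdicComplete (IsLocalRing.maximalIdeal R) R]
    (p : ℕ) [Fact p.Prime] [CharP R p]
    (d : ℕ) (hd : ringKrullDim R = d)
    (x : Fin d → R) (hx : (Ideal.span (Set.range x)).radical = IsLocalRing.maximalIdeal R) :
    (Ideal.span (Set.range fun i =>
        algebraMap R (integralClosure R (AlgebraicClosure (FractionRing R))) (x i)) ≠ ⊤) ∧
    ∀ (k : Fin d) (y : integralClosure R (AlgebraicClosure (FractionRing R))),
      y * algebraMap R (integralClosure R (AlgebraicClosure (FractionRing R))) (x k) ∈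
        Ideal.span ((fun i =>
          algebraMap R (integralClosure R (AlgebraicClosure (FractionRing R))) (x i)) ''
            {i | i < k}) →
      y ∈ Ideal.span ((fun i =>
          algebraMap R (integralClosure R (AlgebraicClosure (FractionRing R))) (x i)) ''
            {i | i < k}) := by
  obtain ⟨g, hg⟩ := BigCM.exists_coefficient_field R p
  obtain ⟨φ, hφX, hφint, hφinj⟩ := BigCM.exists_finite_injective g hg d hd x hx
  have hle : Ideal.span (Set.range x) ≤ IsLocalRing.maximalIdeal R := hx ▸ Ideal.le_radical
  have hRΩ : Function.Injective (algebraMap R (AlgebraicClosure (FractionRing R))) := by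
    rw [IsScalarTower.algebraMap_eq R (FractionRing R) (AlgebraicClosure (FractionRing R))]
    exact (algebraMap (FractionRing R) (AlgebraicClosure (FractionRing R))).injective.comp
      (IsFractionRing.injective R (FractionRing R))
  have hΩp : CharP (AlgebraicClosure (FractionRing R)) p := charP_of_injective_algebraMap hRΩ p
  constructor
  · -- lying over: some prime of the integral closure contracts to the maximal ideal
    obtain ⟨Q, hQ, hQm⟩ := Ideal.exists_ideal_over_maximal_of_isIntegral
      (S := integralClosure R (AlgebraicClosure (FractionRing R)))
      (IsLocalRing.maximalIdeal R) (fun r hr => by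
        have h0 : r = 0 := hRΩ (by
          rw [map_zero]
          exact congrArg Subtype.val hr)
        rw [h0]
        exact zero_mem _)
    refine ne_top_of_le_ne_top hQ.ne_top (Ideal.span_le.2 ?_)
    rintro _ ⟨i, rfl⟩
    have : x i ∈ Q.comap (algebraMap R (integralClosure R (AlgebraicClosure (FractionRing R)))) :=
      hQm ▸ hle (Ideal.subset_span ⟨i, rfl⟩)
    exact this
  · intro k y hy
    obtain rfl : (fun i => φ (MvPowerSeries.X i)) = x := funext hφX
    let _ : Algebra (MvPowerSeries (Fin d) (IsLocalRing.ResidueField R))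
      (AlgebraicClosure (FractionRing R)) := ((algebraMap R _).comp φ).toAlgebra
    have : IsDomain (MvPowerSeries (Fin d) (IsLocalRing.ResidueField R)) :=
      NoZeroDivisors.to_isDomain _
    exact BigCM.mem_of_mul_mem_span_of_flat φ hφint
      (BigCM.flat_integralClosure p (AlgebraicClosure (FractionRing R)) (d + 1) _
        (hRΩ.comp hφinj)
        (BigCM.ringKrullDim_mvPowerSeries_le.trans_lt (by exact_mod_cast Nat.lt_succ_self d)) d
        fun M _ => BigCM.hasProjectiveDimensionLE_mvPowerSeries M)
      MvPowerSeries.X BigCM.isRegular_mvPowerSeries.toIsWeaklyRegular k y hy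
end

section
/- Let K be an algebraically closed field of characteristic p > 0 and let R be a two-dimensional normal standard-graded K-domain. Let f_1,…,f_n be homogeneous R_+-primary elements of degrees d_1 ≤ d_2 ≤ ⋯ ≤ d_n. Then for every m ≥ d_{n−1} + d_n the whole graded piece R_m is contained in the tight closure (f_1,…,f_n)^*. -/
/-!
The ideal `I = (f_1, …, f_n)` contains two homogeneous elements `u, v`, of degrees
`a = d_{n-1}` and `b = d_n`, such that `(u, v)` is still `R_+`-primary
(`exists_parameters`). For `u` one takes a nonzero `f_i`, `i < n`, times a power of a linear form.
The piece `I_b` lies in no minimal prime of `(u)` other than possibly `R_+`, and since `K` is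
infinite it is not covered by its intersections with these finitely many primes
(`exists_mem_forall_notMem`), which yields `v`. A homogeneous prime `Q ≠ R_+` over `(u, v)` would
strictly contain a minimal prime `P ≠ 0` of `(u)`, and the chain `0 < P < Q < R_+` contradicts
`dim R = 2`. If `f_1 = ⋯ = f_{n-1} = 0`, then `u = 0`, `v = f_n` works.

As `(u, v)` is `R_+`-primary, `R_N ⊆ (u, v)` for all `N ≥ D`. Writing an element of `R_N` as
`y u + z v` and inducting on the exponents gives `R_N ⊆ (u^i, v^j)` whenever
`N ≥ D + a i + b j` (`mem_span_pow`). For `g ∈ R_m` with `m ≥ a + b` and a nonzero linear form `x`,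
the element `x^D g^q` has degree `D + q m ≥ D + a q + b q`, so it lies in
`(u^q, v^q) ⊆ I^[q]`; thus `c = x^D` witnesses `g ∈ I^*`.
-/

/-- The Frobenius power `I^[q]` of an ideal. -/
def bracketPow {R : Type} [CommRing R] (I : Ideal R) (q : ℕ) : Ideal R :=
  Ideal.span ((fun a => a ^ q) '' (I : Set R))

/-- The tight closure of an ideal `I` in characteristic `p`. -/
def tightClosure {R : Type} [CommRing R] (p : ℕ) (I : Ideal R) : Set R :=
  {f | ∃ c : R, c ≠ 0 ∧ ∃ e₀ : ℕ, ∀ e ≥ e₀, c * f ^ p ^ e ∈ bracketPow I (p ^ e)}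

/-- If no member of a finite set of ideals contains the `K`-subspace `V`, with `K` infinite, then
some element of `V` avoids all of these ideals at once. -/
theorem exists_mem_forall_notMem {K R : Type} [Field K] [Infinite K] [CommRing R] [Algebra K R]
    (V : Submodule K R) (S : Set (Ideal R)) (hS : S.Finite)
    (h : ∀ P ∈ S, ∃ v ∈ V, v ∉ P) : ∃ v ∈ V, ∀ P ∈ S, v ∉ P := by
  by_contra! hcon
  have : Finite S := hS
  obtain ⟨P, hP⟩ := Subspace.exists_eq_top_of_iUnion_eq_univ
    (p := fun P : S => ((P : Ideal R).restrictScalars K).comap V.subtype) (by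
      refine Set.eq_univ_of_forall fun v => ?_
      obtain ⟨P, hPS, hvP⟩ := hcon v v.2
      exact Set.mem_iUnion.2 ⟨⟨P, hPS⟩, hvP⟩)
  obtain ⟨v, hv, hvP⟩ := h P P.2
  have : (⟨v, hv⟩ : V) ∈ ((P : Ideal R).restrictScalars K).comap V.subtype := hP ▸ trivial
  exact hvP this

/-- A standard-graded domain of dimension `2` has a nonzero form of degree one: otherwise
`R = K`. -/
theorem exists_ne_zero_mem_one {K R : Type} [Field K] [CommRing R] [IsDomain R]
    [Algebra K R] (A : ℕ → Submodule K R) (s : Set R) (hs : s ⊆ (A 1 : Set R))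
    (hadj : Algebra.adjoin K s = ⊤) (hdim : ringKrullDim R = 2) : ∃ x ∈ A 1, x ≠ 0 := by
  by_contra! hcon
  have hbot : Algebra.adjoin K s = ⊥ := by
    refine le_bot_iff.1 (Algebra.adjoin_le fun x hx => ?_)
    rw [hcon x (hs hx)]
    exact zero_mem _
  have hfield : IsField R := by
    refine ⟨⟨0, 1, zero_ne_one⟩, mul_comm, fun {r} hr => ?_⟩
    have : r ∈ (⊥ : Subalgebra K R) := by rw [← hbot, hadj]; trivial
    obtain ⟨k, rfl⟩ := Algebra.mem_bot.1 this
    have hk : k ≠ 0 := by rintro rfl; simp at hr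
    exact ⟨algebraMap K R k⁻¹, by rw [← map_mul, mul_inv_cancel₀ hk, map_one]⟩
  rw [ringKrullDim_eq_zero_of_isField hfield] at hdim
  norm_num at hdim

/-- In dimension `2` there is no chain `0 < P < Q < M` of prime ideals. -/
theorem false_of_chain {R : Type} [CommRing R] [IsDomain R] (hdim : ringKrullDim R = 2)
    (P Q M : Ideal R) [hP : P.IsPrime] [hQ : Q.IsPrime] [hM : M.IsPrime]
    (h₁ : ⊥ < P) (h₂ : P < Q) (h₃ : Q < M) : False := by
  let c : LTSeries (PrimeSpectrum R) :=
    { length := 3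
      toFun := ![⟨⊥, Ideal.isPrime_bot⟩, ⟨P, hP⟩, ⟨Q, hQ⟩, ⟨M, hM⟩]
      step := by
        intro i
        fin_cases i
        exacts [h₁, h₂, h₃] }
  have h := Order.LTSeries.length_le_krullDim c
  have hc : c.length = 3 := rfl
  rw [hc, show Order.krullDim (PrimeSpectrum R) = 2 from hdim] at h
  exact absurd h (by decide)

section Graded

variable {K : Type} [Field K] {R : Type} [CommRing R] [Algebra K R]
  (A : ℕ → Submodule K R) [GradedAlgebra A]

/-- In a standard-graded algebra, `R_N` lies in the `N`-th power of the ideal generated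
by `R_1`. -/
theorem mem_span_one_pow (s : Set R) (hs : s ⊆ (A 1 : Set R)) (hadj : Algebra.adjoin K s = ⊤)
    (N : ℕ) {x : R} (hx : x ∈ A N) : x ∈ Ideal.span (A 1 : Set R) ^ N := by
  have key : ∀ r : R, ((DirectSum.decompose A r N : A N) : R) ∈ Ideal.span (A 1 : Set R) ^ N := by
    intro r
    have hr : r ∈ Submodule.span K (Submonoid.closure s : Set R) := by
      rw [← Algebra.adjoin_eq_span, hadj]; trivial
    induction hr using Submodule.span_induction with
    | mem y hy =>
      have hk : ∃ k, y ∈ A k ∧ y ∈ Ideal.span (A 1 : Set R) ^ k := by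
        induction hy using Submonoid.closure_induction with
        | mem z hz => exact ⟨1, hs hz, by simpa using Ideal.subset_span (hs hz)⟩
        | one => exact ⟨0, SetLike.GradedOne.one_mem, by simp⟩
        | mul z w _ _ hz hw =>
          obtain ⟨k, hk, hk'⟩ := hz
          obtain ⟨l, hl, hl'⟩ := hw
          exact ⟨k + l, SetLike.mul_mem_graded hk hl, by
            rw [pow_add]; exact Ideal.mul_mem_mul hk' hl'⟩
      obtain ⟨k, hk, hk'⟩ := hk
      by_cases hkN : k = N
      · subst hkN
        rwa [DirectSum.decompose_of_mem_same A hk]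
      · rw [DirectSum.decompose_of_mem_ne A hk hkN]
        exact zero_mem _
    | zero => simp
    | add y z _ _ hy hz => simpa using add_mem hy hz
    | smul c y _ hy =>
      have := Submodule.smul_of_tower_mem (Ideal.span (A 1 : Set R) ^ N) c hy
      rw [DirectSum.decompose_smul]
      exact this
  simpa [DirectSum.decompose_of_mem_same A hx] using key x

theorem irrelevant_le_span_one (s : Set R) (hs : s ⊆ (A 1 : Set R))
    (hadj : Algebra.adjoin K s = ⊤) :
    (HomogeneousIdeal.irrelevant A).toIdeal ≤ Ideal.span (A 1 : Set R) := by
  rw [HomogeneousIdeal.irrelevant_eq_span, Ideal.span_le]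
  intro x hx
  simp only [Set.mem_iUnion] at hx
  obtain ⟨i, hi, hx⟩ := hx
  exact Ideal.pow_le_self (by omega) (mem_span_one_pow A s hs hadj i hx)

theorem span_one_le_irrelevant :
    Ideal.span (A 1 : Set R) ≤ (HomogeneousIdeal.irrelevant A).toIdeal :=
  Ideal.span_le.2 fun _ hx => HomogeneousIdeal.mem_irrelevant_of_mem A one_pos hx

/-- Over `R_0 = K`, every proper homogeneous ideal is contained in `R_+`. -/
theorem le_irrelevant (h0 : A 0 = Submodule.span K {1}) (Q : Ideal R) (hQ : Q.IsHomogeneous A)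
    (hne : Q ≠ ⊤) : Q ≤ (HomogeneousIdeal.irrelevant A).toIdeal := by
  intro r hr
  change ((DirectSum.decompose A r 0 : A 0) : R) = 0
  have h1 : ((DirectSum.decompose A r 0 : A 0) : R) ∈ Q := hQ 0 hr
  have h2 : ((DirectSum.decompose A r 0 : A 0) : R) ∈ Submodule.span K {(1 : R)} :=
    h0 ▸ (DirectSum.decompose A r 0).2
  obtain ⟨k, hk⟩ := Submodule.mem_span_singleton.1 h2
  rw [← hk] at h1 ⊢
  by_cases hk0 : k = 0
  · simp [hk0]
  · refine absurd ((Ideal.eq_top_iff_one _).2 ?_) hne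
    simpa [smul_smul, hk0] using Submodule.smul_of_tower_mem Q k⁻¹ h1

/-- If `(u, v)` contains all pieces of degree at least `D`, then `(u^i, v^j)` contains all pieces
of degree at least `D + a i + b j`, where `a, b` are the degrees of `u, v`. -/
theorem mem_span_pow {u v : R} {a b D : ℕ} (hu : u ∈ A a) (hv : v ∈ A b)
    (hD : ∀ N ≥ D, ∀ x ∈ A N, x ∈ Ideal.span {u, v}) (k : ℕ) :
    ∀ i j, i + j = k → ∀ N ≥ D + a * i + b * j, ∀ x ∈ A N, x ∈ Ideal.span {u ^ i, v ^ j} := by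
  induction k with
  | zero =>
    intro i j hij N _ x _
    obtain rfl : i = 0 := by omega
    rw [pow_zero, (Ideal.eq_top_iff_one _).2 (Ideal.subset_span (by simp))]
    trivial
  | succ k ih =>
    intro i j hij N hN x hx
    rcases i with _ | i
    · rw [pow_zero, (Ideal.eq_top_iff_one _).2 (Ideal.subset_span (by simp))]
      trivial
    rcases j with _ | j
    · rw [pow_zero, (Ideal.eq_top_iff_one _).2 (Ideal.subset_span (by simp))]
      trivial
    rw [mul_add, mul_add] at hN
    obtain ⟨y, z, hyz⟩ := Ideal.mem_span_pair.1 (hD N (by omega) x hx)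
    -- taking degree-`N` components makes the coefficients of `u` and `v` homogeneous
    have hx' : x = ((DirectSum.decompose A y (N - a) : A (N - a)) : R) * u +
        ((DirectSum.decompose A z (N - b) : A (N - b)) : R) * v := by
      rw [← DirectSum.coe_decompose_mul_of_right_mem_of_le A hu (by omega),
        ← DirectSum.coe_decompose_mul_of_right_mem_of_le A hv (by omega)]
      conv_lhs => rw [← DirectSum.decompose_of_mem_same A hx, ← hyz]
      simp
    have hy := ih i (j + 1) (by omega) (N - a) (by rw [mul_add]; omega) _
      (DirectSum.decompose A y (N - a)).2
    have hz := ih (i + 1) j (by omega) (N - b) (by rw [mul_add]; omega) _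
      (DirectSum.decompose A z (N - b)).2
    obtain ⟨y₁, y₂, hy'⟩ := Ideal.mem_span_pair.1 hy
    obtain ⟨z₁, z₂, hz'⟩ := Ideal.mem_span_pair.1 hz
    rw [hx', ← hy', ← hz', Ideal.mem_span_pair]
    exact ⟨y₁ + z₁ * v, y₂ * u + z₂, by ring⟩

/-- An `R_+`-primary ideal `I` generated by forms of degree at most `b` contains, for every
nonzero form `u`, a form `v` of degree `b` such that every prime over `(u, v)` contains `R_+`. -/
theorem exists_second_parameter [Infinite K] [IsDomain R] [IsNoetherianRing R]
    (h0 : A 0 = Submodule.span K {1})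
    (hirr : (HomogeneousIdeal.irrelevant A).toIdeal ≤ Ideal.span (A 1 : Set R))
    (hdim : ringKrullDim R = 2) {ι : Type} (f : ι → R) (d : ι → ℕ) (hf : ∀ i, f i ∈ A (d i))
    (hprim : (Ideal.span (Set.range f)).radical = (HomogeneousIdeal.irrelevant A).toIdeal)
    {a b : ℕ} (hb : ∀ i, d i ≤ b) {u : R} (hu : u ∈ A a) (hu0 : u ≠ 0) :
    ∃ v ∈ A b, v ∈ Ideal.span (Set.range f) ∧
      ∀ Q : Ideal R, Q.IsPrime → u ∈ Q → v ∈ Q →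
        (HomogeneousIdeal.irrelevant A).toIdeal ≤ Q := by
  set M := (HomogeneousIdeal.irrelevant A).toIdeal with hM
  have hMprime : M.IsPrime := RingHom.ker_isPrime (GradedRing.projZeroRingHom A)
  set I := Ideal.span (Set.range f) with hI
  obtain ⟨v, hvV, hv⟩ := exists_mem_forall_notMem (K := K) (I.restrictScalars K ⊓ A b)
    {P | P ∈ (Ideal.span {u}).minimalPrimes ∧ ¬ M ≤ P}
    (((Ideal.span {u}).finite_minimalPrimes_of_isNoetherianRing).subset fun P hP => hP.1) (by
      rintro P ⟨hPmin, hMP⟩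
      have hPp : P.IsPrime := hPmin.1.1
      have h1 : ∃ i, f i ∉ P := by
        by_contra! hall
        exact hMP (hprim ▸ hPp.radical_le_iff.2
          (Ideal.span_le.2 (by rintro _ ⟨i, rfl⟩; exact hall i)))
      have h2 : ∃ x ∈ A 1, x ∉ P := by
        by_contra! hall
        exact hMP (hirr.trans (Ideal.span_le.2 hall))
      obtain ⟨i, hi⟩ := h1
      obtain ⟨x, hx, hxP⟩ := h2
      refine ⟨f i * x ^ (b - d i),
        ⟨I.mul_mem_right _ (Ideal.subset_span ⟨i, rfl⟩), ?_⟩, fun hmem => ?_⟩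
      · have := SetLike.mul_mem_graded (hf i) (SetLike.pow_mem_graded (b - d i) hx)
        rwa [smul_eq_mul, mul_one, Nat.add_sub_cancel' (hb i)] at this
      · rcases hPp.mem_or_mem hmem with h | h
        · exact hi h
        · exact hxP (hPp.mem_of_pow_mem _ h))
  refine ⟨v, hvV.2, hvV.1, fun Q₀ hQ₀ huQ₀ hvQ₀ => ?_⟩
  -- the homogeneous core of `Q₀` is a homogeneous prime still containing `u` and `v`
  set Q := (Q₀.homogeneousCore A).toIdeal with hQdef
  have hQle : Q ≤ Q₀ := Ideal.toIdeal_homogeneousCore_le A Q₀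
  have hQ : Q.IsPrime := hQ₀.homogeneousCore
  have huQ : u ∈ Q := Ideal.mem_homogeneousCore_of_homogeneous_of_mem ⟨a, hu⟩ huQ₀
  have hvQ : v ∈ Q := Ideal.mem_homogeneousCore_of_homogeneous_of_mem ⟨b, hvV.2⟩ hvQ₀
  refine le_trans ?_ hQle
  obtain ⟨P, hPmin, hPQ⟩ := Ideal.exists_minimalPrimes_le (I := Ideal.span {u}) (J := Q)
    ((Ideal.span_singleton_le_iff_mem _).2 huQ)
  have hPp : P.IsPrime := hPmin.1.1
  by_cases hMP : M ≤ P
  · exact hMP.trans hPQ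
  by_contra hMQ
  have huP : u ∈ P := hPmin.1.2 (Ideal.mem_span_singleton_self u)
  refine false_of_chain hdim P Q M (bot_lt_iff_ne_bot.2 ?_) (lt_of_le_of_ne hPQ ?_)
    (lt_of_le_not_ge (le_irrelevant A h0 Q (Q₀.homogeneousCore A).isHomogeneous hQ.ne_top) hMQ)
  · rintro rfl
    exact hu0 huP
  · rintro rfl
    exact hv _ ⟨hPmin, hMP⟩ hvQ

/-- Forms `u, v ∈ I` of the two largest generator degrees `d k` and `d l` such that every prime over
`(u, v)` contains `R_+`. -/
theorem exists_parameters [Infinite K] [IsDomain R] [IsNoetherianRing R]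
    (h0 : A 0 = Submodule.span K {1})
    (hirr : (HomogeneousIdeal.irrelevant A).toIdeal ≤ Ideal.span (A 1 : Set R))
    (hdim : ringKrullDim R = 2) {x : R} (hx : x ∈ A 1) (hx0 : x ≠ 0)
    (n : ℕ) (k l : Fin n) (hk : (k : ℕ) = n - 2) (hl : (l : ℕ) = n - 1)
    (f : Fin n → R) (d : Fin n → ℕ)
    (hf : ∀ i, f i ∈ A (d i)) (hmono : Monotone d)
    (hprim : (Ideal.span (Set.range f)).radical = (HomogeneousIdeal.irrelevant A).toIdeal) :
    ∃ u ∈ A (d k), ∃ v ∈ A (d l),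
      u ∈ Ideal.span (Set.range f) ∧ v ∈ Ideal.span (Set.range f) ∧
      ∀ Q : Ideal R, Q.IsPrime → u ∈ Q → v ∈ Q →
        (HomogeneousIdeal.irrelevant A).toIdeal ≤ Q := by
  by_cases hz : ∃ i : Fin n, i ≤ k ∧ f i ≠ 0
  · obtain ⟨i, hi, hfi⟩ := hz
    have hdi : d i ≤ d k := hmono hi
    have hu : f i * x ^ (d k - d i) ∈ A (d k) := by
      have := SetLike.mul_mem_graded (hf i)
        (SetLike.pow_mem_graded (d k - d i) hx)
      rwa [smul_eq_mul, mul_one, Nat.add_sub_cancel' hdi] at this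
    obtain ⟨v, hv, hvI, hQ⟩ := exists_second_parameter A h0 hirr hdim f d hf hprim (b := d l)
      (fun j => hmono (Fin.le_def.2 (by have := j.2; omega))) hu
      (mul_ne_zero hfi (pow_ne_zero _ hx0))
    exact ⟨_, hu, v, hv, Ideal.mul_mem_right _ _ (Ideal.subset_span ⟨i, rfl⟩), hvI, hQ⟩
  · push Not at hz
    refine ⟨0, zero_mem _, f l, hf _, zero_mem _,
      Ideal.subset_span ⟨_, rfl⟩, fun Q hQ _ hv => ?_⟩
    rw [← hprim, hQ.radical_le_iff, Ideal.span_le]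
    rintro _ ⟨j, rfl⟩
    by_cases hj : j ≤ k
    · rw [hz j hj]; exact zero_mem _
    · have : j = l := Fin.ext (by have := j.2; have := Fin.le_def.not.1 hj; omega)
      rw [this]; exact hv

end Graded

/-- Let `K` be an algebraically closed field of characteristic `p > 0`
and let `R` be a two-dimensional normal standard-graded `K`-domain (graded by
`A : ℕ → Submodule K R` with `A 0 = K·1`, generated over `K` by finitely many elements of
degree one). Let `f_1,…,f_n` be homogeneous `R_+`-primary elements of degrees
`d_1 ≤ ⋯ ≤ d_n`. Then for every `m ≥ d_{n-1} + d_n`, the graded piece `R_m` is contained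
in `(f_1,…,f_n)^*`. -/
theorem statement14 (K : Type) [Field K] [IsAlgClosed K]
    (p : ℕ) [Fact p.Prime] [CharP K p]
    (R : Type) [CommRing R] [IsDomain R] [IsIntegrallyClosed R] [Algebra K R]
    (A : ℕ → Submodule K R) [GradedAlgebra A]
    (h0 : A 0 = Submodule.span K {1})
    (hstd : ∃ s : Finset R, (s : Set R) ⊆ (A 1 : Set R) ∧ Algebra.adjoin K (s : Set R) = ⊤)
    (hdim : ringKrullDim R = 2)
    (n : ℕ) (hn : 2 ≤ n) (f : Fin n → R) (d : Fin n → ℕ)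
    (hf : ∀ i, f i ∈ A (d i)) (hmono : Monotone d)
    (hprim : (Ideal.span (Set.range f)).radical = (HomogeneousIdeal.irrelevant A).toIdeal)
    (m : ℕ) (hm : d ⟨n - 2, by omega⟩ + d ⟨n - 1, by omega⟩ ≤ m)
    (g : R) (hg : g ∈ A m) :
    g ∈ tightClosure p (Ideal.span (Set.range f)) := by
  obtain ⟨s, hs, hadj⟩ := hstd
  have hft : Algebra.FiniteType K R := ⟨⟨s, hadj⟩⟩
  have hnoeth : IsNoetherianRing R := Algebra.FiniteType.isNoetherianRing K R
  have hinf : Infinite K := IsAlgClosed.instInfinite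
  obtain ⟨x, hx, hx0⟩ := exists_ne_zero_mem_one A s hs hadj hdim
  have hirr := irrelevant_le_span_one A s hs hadj
  obtain ⟨u, hu, v, hv, huI, hvI, hQ⟩ :=
    exists_parameters A h0 hirr hdim hx hx0 n ⟨n - 2, by omega⟩ ⟨n - 1, by omega⟩ rfl rfl
      f d hf hmono hprim
  have hrad : Ideal.span (A 1 : Set R) ≤ (Ideal.span {u, v}).radical := by
    rw [Ideal.radical_eq_sInf]
    refine le_sInf fun Q hQ' => (span_one_le_irrelevant A).trans (hQ Q hQ'.2 ?_ ?_)
    · exact hQ'.1 (Ideal.subset_span (by simp))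
    · exact hQ'.1 (Ideal.subset_span (by simp))
  obtain ⟨D, hD⟩ := Ideal.exists_radical_pow_le_of_fg (Ideal.span {u, v})
    (IsNoetherian.noetherian _)
  have hDN : ∀ N ≥ D, ∀ y ∈ A N, y ∈ Ideal.span {u, v} := fun N hN y hy =>
    hD (Ideal.pow_right_mono hrad D (Ideal.pow_le_pow_right hN
      (mem_span_one_pow A s hs hadj N hy)))
  refine ⟨x ^ D, pow_ne_zero _ hx0, 0, fun e _ => ?_⟩
  have hmem : x ^ D * g ^ p ^ e ∈ A (D + p ^ e * m) := by
    have := SetLike.mul_mem_graded (SetLike.pow_mem_graded D hx)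
      (SetLike.pow_mem_graded (p ^ e) hg)
    simpa using this
  have hle : Ideal.span {u ^ p ^ e, v ^ p ^ e} ≤
      bracketPow (Ideal.span (Set.range f)) (p ^ e) := by
    refine Ideal.span_mono ?_
    rintro _ (rfl | rfl)
    exacts [⟨u, huI, rfl⟩, ⟨v, hvI, rfl⟩]
  refine hle (mem_span_pow A hu hv hDN _ _ _ rfl _ ?_ _ hmem)
  have := Nat.mul_le_mul_left (p ^ e) hm
  rw [mul_add, mul_comm (p ^ e) (d _), mul_comm (p ^ e) (d _)] at this
  omega
end

section
/- Let R be a normal ℕ-graded integral domain of finite type over a perfect field K = R_0 of characteristic p > 0. Let I be a homogeneous ideal generated by homogeneous elements of degree ≥ M, and let f be a homogeneous element of degree ≤ M. Then f belongs to the tight closure I^* if and only if f belongs to I. -/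
section Helpers

open DirectSum Polynomial

/-- By strong induction on `d`: if `s` is a finite set of homogeneous algebra generators of positive
degrees, then `A d` for `d > 0` is the sum of the spaces `A (d - deg t) * t` over `t ∈ s` with `deg t ≤ d`. -/
theorem finite_graded_piece {K : Type} [Field K] {R : Type} [CommRing R] [Algebra K R]
    [Algebra.FiniteType K R] (A : ℕ → Submodule K R) [GradedAlgebra A]
    (h0 : A 0 = Submodule.span K {1}) (d : ℕ) : Module.Finite K (A d) := by
  classical
  have : IsScalarTower K (A 0) R := ⟨fun k a r => smul_mul_assoc k (a : R) r⟩
  have : Algebra.FiniteType (A 0) R := Algebra.FiniteType.of_restrictScalars_finiteType K (A 0) R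
  obtain ⟨s, hs, hn⟩ := GradedAlgebra.exists_finset_adjoin_eq_top_and_homogeneous_ne_zero A
  choose! n hn0 hn using hn
  -- every element is a scalar plus an element of the ideal generated by `s`
  have key : ∀ r : R, ∃ a ∈ A 0, r - a ∈ Ideal.span (s : Set R) := by
    intro r
    have hr : r ∈ Algebra.adjoin (A 0) (s : Set R) := by rw [hs]; trivial
    induction hr using Algebra.adjoin_induction with
    | mem x hx => exact ⟨0, zero_mem _, by simpa using Ideal.subset_span hx⟩
    | algebraMap a =>
      exact ⟨a, a.2, by rw [SetLike.GradeZero.algebraMap_apply, sub_self]; exact zero_mem _⟩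
    | add x y _ _ hx hy =>
      obtain ⟨a, ha, hxa⟩ := hx
      obtain ⟨b, hb, hyb⟩ := hy
      exact ⟨a + b, add_mem ha hb, by convert add_mem hxa hyb using 1; ring⟩
    | mul x y _ _ hx hy =>
      obtain ⟨a, ha, hxa⟩ := hx
      obtain ⟨b, hb, hyb⟩ := hy
      refine ⟨a * b, by simpa using SetLike.mul_mem_graded ha hb, ?_⟩
      convert add_mem (Ideal.mul_mem_right y _ hxa) (Ideal.mul_mem_left _ a hyb) using 1; ring
  induction d using Nat.strong_induction_on with
  | _ d ih =>
  rcases Nat.eq_zero_or_pos d with rfl | hd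
  · rw [h0]; infer_instance
  let P : R → Submodule K R := fun t =>
    if n t ≤ d then (A (d - n t)).map (LinearMap.mulRight K t) else ⊥
  let W : Submodule K R := s.sup P
  have hW : W.FG := by
    refine Submodule.fg_finset_sup s _ fun t ht => ?_
    simp only [P]
    split_ifs with h
    · exact (Module.Finite.iff_fg.1 (ih _ (by have := hn0 t ht; omega))).map _
    · exact Submodule.fg_bot
  have hJ : ∀ x ∈ Ideal.span (s : Set R), ∀ r : R, (decompose A (r * x) d : R) ∈ W := by
    intro x hx
    induction hx using Submodule.span_induction with
    | mem t ht =>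
      intro r
      rw [coe_decompose_mul_of_right_mem A d (hn t ht)]
      split_ifs with h
      · have : P t ≤ W := Finset.le_sup ht
        simp only [P, if_pos h] at this
        exact this ⟨_, SetLike.coe_mem _, rfl⟩
      · exact zero_mem _
    | zero => intro r; simp
    | add x y _ _ hx hy =>
      intro r
      rw [mul_add, decompose_add]
      exact add_mem (hx r) (hy r)
    | smul a x _ hx => intro r; rw [smul_eq_mul, ← mul_assoc]; exact hx _
  have hle : A d ≤ W := by
    intro r hr
    obtain ⟨a, ha, hra⟩ := key r
    have := hJ _ hra 1
    rw [one_mul, decompose_sub] at this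
    simpa [decompose_of_mem_same A hr, decompose_of_mem_ne A ha hd.ne, DirectSum.sub_apply]
      using this
  have : Module.Finite K W := Module.Finite.iff_fg.2 hW
  exact Submodule.finiteDimensional_of_le hle

/-- The homomorphism `R → R[X]` sending `r = ∑ rᵢ` to `∑ rᵢ Xⁱ`. Since `R[X]` is a domain when `R`
is, `natDegree` of the image is a degree function on `R`, additive on products of nonzero
elements. -/
noncomputable def gradedPoly {K : Type} [Field K] {R : Type} [CommRing R] [Algebra K R]
    (A : ℕ → Submodule K R) [GradedAlgebra A] : R →ₐ[K] R[X] :=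
  (DirectSum.toAlgebra K (fun i => A i)
    (fun i => ((monomial i).restrictScalars K : R →ₗ[K] R[X]) ∘ₗ (A i).subtype)
    (by rfl) (by
      intro i j a b
      simp [Polynomial.monomial_mul_monomial])).comp (decomposeAlgEquiv A).toAlgHom

theorem coeff_gradedPoly {K : Type} [Field K] {R : Type} [CommRing R] [Algebra K R]
    (A : ℕ → Submodule K R) [GradedAlgebra A] (r : R) (i : ℕ) :
    (gradedPoly A r).coeff i = decompose A r i := by
  classical
  induction r using DirectSum.Decomposition.inductionOn A with
  | zero => simp
  | @homogeneous j m =>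
    have : gradedPoly A (m : R) = monomial j (m : R) := by
      change DirectSum.toAddMonoid
        (fun i => (((monomial i).restrictScalars K : R →ₗ[K] R[X]) ∘ₗ
          (A i).subtype).toAddMonoidHom) (decompose A (m : R)) = _
      rw [decompose_coe, DirectSum.toAddMonoid_of]
      rfl
    rw [this, coeff_monomial, decompose_coe, coe_of_apply]
    split_ifs <;> rfl
  | add x y hx hy => simp [hx, hy]

/-- If the elements of `L` having `p ^ e`-th roots for all large `e` are all in `K`, then a finite
`K`-linearly independent family is, for all large `e`, linearly independent over the subfield of
`p ^ e`-th powers. Induction on the size: if `w 0` were dependent on the remaining vectors for every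
large `e`, then by uniqueness of coefficients the same relation would serve for all `e`, and so
would have coefficients in `K`. -/
theorem frob_indep {p : ℕ} [Fact p.Prime] {K L : Type} [Field K] [Field L] [Algebra K L] [CharP L p]
    (hK : ∀ x : L, (∃ e₀, ∀ e ≥ e₀, ∃ y, y ^ p ^ e = x) → ∃ k : K, algebraMap K L k = x)
    {m : ℕ} (w : Fin m → L) (hw : LinearIndependent K w) :
    ∃ e₀, ∀ e ≥ e₀, ∀ a : Fin m → L, ∑ j, a j ^ p ^ e * w j = 0 → a = 0 := by
  have hp : ∀ e, p ^ e ≠ 0 := fun e => pow_ne_zero _ (Fact.out : p.Prime).ne_zero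
  -- independence over `L ^ (p ^ e)` persists for larger `e`
  have mono : ∀ {m : ℕ} (w : Fin m → L) (e : ℕ),
      (∀ a : Fin m → L, ∑ j, a j ^ p ^ e * w j = 0 → a = 0) →
      ∀ e' ≥ e, ∀ a : Fin m → L, ∑ j, a j ^ p ^ e' * w j = 0 → a = 0 := by
    intro m w e h e' he a ha
    obtain ⟨k, rfl⟩ := Nat.exists_eq_add_of_le he
    have := h (fun j => a j ^ p ^ k) (by
      rw [← ha]; congr! 2 with j; rw [← pow_mul, ← pow_add, add_comm])
    funext j
    exact eq_zero_of_pow_eq_zero (n := p ^ k) (congrFun this j)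
  induction m with
  | zero => exact ⟨0, fun e _ a _ => Subsingleton.elim _ _⟩
  | succ m ih =>
    obtain ⟨e₀, h₀⟩ := ih (Fin.tail w) (hw.comp _ (Fin.succ_injective m))
    by_contra hcon
    have hrel : ∀ e ≥ e₀, ∃ b : Fin m → L, w 0 = ∑ j, b j ^ p ^ e * w j.succ := by
      intro e he
      by_contra hb
      refine hcon ⟨e, mono w e fun a ha => ?_⟩
      rw [Fin.sum_univ_succ] at ha
      by_cases ha0 : a 0 = 0
      · rw [ha0, zero_pow (hp e), zero_mul, zero_add] at ha
        have := h₀ e he (Fin.tail a) ha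
        funext j
        refine Fin.cases ha0 (fun i => congrFun this i) j
      · refine (hb ⟨fun j => - a j.succ / a 0, ?_⟩).elim
        have h1 : a 0 ^ p ^ e ≠ 0 := pow_ne_zero _ ha0
        apply mul_left_cancel₀ h1
        rw [eq_neg_of_add_eq_zero_left ha, Finset.mul_sum, ← Finset.sum_neg_distrib]
        refine Finset.sum_congr rfl fun j _ => ?_
        have hneg : (-a j.succ) ^ p ^ e = - a j.succ ^ p ^ e := by
          have := map_neg (iterateFrobenius L p e) (a j.succ)
          simpa only [iterateFrobenius_def] using this
        rw [div_pow, hneg]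
        field_simp
    choose! b hb using hrel
    have hconst : ∀ e ≥ e₀, ∀ j, b e j ^ p ^ e = b e₀ j ^ p ^ e₀ := by
      intro e he
      obtain ⟨k, rfl⟩ := Nat.exists_eq_add_of_le he
      have h1 : ∀ j, b (e₀ + k) j ^ p ^ (e₀ + k) = (b (e₀ + k) j ^ p ^ k) ^ p ^ e₀ := by
        intro j; rw [← pow_mul, ← pow_add, add_comm]
      have := h₀ e₀ le_rfl (fun j => b (e₀ + k) j ^ p ^ k - b e₀ j) (by
        simp only [sub_pow_char_pow, sub_mul, Finset.sum_sub_distrib, ← h1, Fin.tail]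
        rw [← hb _ he, ← hb _ le_rfl, sub_self])
      intro j
      rw [h1, sub_eq_zero.1 (congrFun this j)]
    choose k hk using fun j => hK (b e₀ j ^ p ^ e₀) ⟨e₀, fun e he => ⟨_, hconst e he j⟩⟩
    have hw0 := (linearIndependent_finSucc.1 hw).2
    apply hw0
    rw [hb e₀ le_rfl]
    refine Submodule.sum_mem _ fun j _ => ?_
    rw [← hk, ← Algebra.smul_def]
    exact Submodule.smul_mem _ _ (Submodule.subset_span ⟨j, rfl⟩)

/-- `K` is integrally closed in `R`: a nonzero element integral over `K` is a unit, and units of a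
graded domain have degree zero. -/
theorem mem_base_of_isIntegral {K : Type} [Field K] {R : Type} [CommRing R] [IsDomain R]
    [Algebra K R]
    (A : ℕ → Submodule K R) [GradedAlgebra A] (h0 : A 0 = Submodule.span K {1})
    (r : R) (hr : IsIntegral K r) : ∃ k : K, algebraMap K R k = r := by
  classical
  by_cases hr0 : r = 0
  · exact ⟨0, by simp [hr0]⟩
  have hu : IsUnit (gradedPoly A r) := (hr.isUnit hr0).map (gradedPoly A)
  have hdeg := Polynomial.natDegree_eq_zero_of_isUnit hu
  have hmem : r ∈ A 0 := by
    rw [← DirectSum.sum_support_decompose A r]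
    refine Submodule.sum_mem _ fun i _ => ?_
    rcases Nat.eq_zero_or_pos i with rfl | hi
    · exact SetLike.coe_mem _
    · rw [← coeff_gradedPoly, Polynomial.coeff_eq_zero_of_natDegree_lt (by omega)]
      exact zero_mem _
  rw [h0, Submodule.mem_span_singleton] at hmem
  obtain ⟨k, hk⟩ := hmem
  exact ⟨k, by rw [← hk, Algebra.smul_def, mul_one]⟩

/-- The elements of the fraction field of `R` that have `p ^ e`-th roots for all large `e` are
those of `K`. -/
theorem mem_base_of_perfect {K : Type} [Field K] {p : ℕ} [Fact p.Prime]
    {R : Type} [CommRing R] [IsDomain R] [IsIntegrallyClosed R] [Algebra K R]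
    [Algebra.FiniteType K R] (A : ℕ → Submodule K R) [GradedAlgebra A]
    (h0 : A 0 = Submodule.span K {1}) (x : FractionRing R)
    (hx : ∃ e₀, ∀ e ≥ e₀, ∃ y, y ^ p ^ e = x) :
    ∃ k : K, algebraMap K (FractionRing R) k = x := by
  classical
  obtain ⟨e₀, hx⟩ := hx
  obtain ⟨a, b, hb, rfl⟩ := IsFractionRing.div_surjective (A := R) x
  have hb0 : b ≠ 0 := nonZeroDivisors.ne_zero hb
  have hbL : algebraMap R (FractionRing R) b ≠ 0 := by simpa using hb0
  let D := max (gradedPoly A a).natDegree (gradedPoly A b).natDegree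
  -- the space of elements of degree at most `D`
  let W : Submodule K R := (Finset.range (D + 1)).sup A
  have : Module.Finite K W := Module.Finite.iff_fg.2 <| Submodule.fg_finset_sup _ _ fun i _ =>
    Module.Finite.iff_fg.1 (finite_graded_piece A h0 i)
  have hW : ∀ z, (gradedPoly A z).natDegree ≤ D → z ∈ W := by
    intro z hz
    rw [← DirectSum.sum_support_decompose A z]
    refine Submodule.sum_mem _ fun i hi => ?_
    have hi' : i < D + 1 := by
      by_contra hlt
      have := coeff_gradedPoly A z i
      rw [Polynomial.coeff_eq_zero_of_natDegree_lt (by omega)] at this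
      exact (DFinsupp.mem_support_iff.1 hi) (Subtype.ext this.symm)
    exact Finset.le_sup (f := A) (Finset.mem_range.2 hi') (SetLike.coe_mem _)
  -- a root of this order has more than `dim W` powers with exponent below `p ^ e`
  let e := max e₀ (Module.finrank K W)
  obtain ⟨y, hy⟩ := hx e (le_max_left _ _)
  have hq : Module.finrank K W < p ^ e :=
    (le_max_right _ _).trans_lt (Nat.lt_pow_self (Fact.out : p.Prime).one_lt)
  have hq0 : 0 < p ^ e := by omega
  have hz : ∀ j : Fin (p ^ e), ∃ z : W,
      algebraMap R (FractionRing R) z = algebraMap R (FractionRing R) b * y ^ (j : ℕ) := by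
    intro j
    have hj : (j : ℕ) ≤ p ^ e := j.2.le
    have hpow : (algebraMap R (FractionRing R) b * y ^ (j : ℕ)) ^ p ^ e
        = algebraMap R (FractionRing R) (b ^ (p ^ e - j) * a ^ (j : ℕ)) := by
      rw [mul_pow, ← pow_mul, mul_comm (j : ℕ), pow_mul, hy, div_pow, map_mul, map_pow, map_pow]
      rw [← pow_sub_mul_pow _ hj, mul_assoc, mul_div_cancel₀ _ (pow_ne_zero _ hbL)]
    obtain ⟨z, hz⟩ := IsIntegrallyClosed.exists_algebraMap_eq_of_isIntegral_pow (R := R) hq0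
      (hpow ▸ isIntegral_algebraMap)
    refine ⟨⟨z, hW z ?_⟩, hz⟩
    have hzq : z ^ p ^ e = b ^ (p ^ e - j) * a ^ (j : ℕ) := by
      apply IsFractionRing.injective R (FractionRing R)
      rw [map_pow, hz, hpow]
    have h1 := congrArg (fun r => (gradedPoly A r).natDegree) hzq
    simp only [map_mul, map_pow, Polynomial.natDegree_pow] at h1
    have h2 := Polynomial.natDegree_mul_le (p := gradedPoly A b ^ (p ^ e - j))
      (q := gradedPoly A a ^ (j : ℕ))
    rw [Polynomial.natDegree_pow, Polynomial.natDegree_pow] at h2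
    have h3 : (p ^ e - j) * (gradedPoly A b).natDegree ≤ (p ^ e - j) * D :=
      Nat.mul_le_mul_left _ (le_max_right _ _)
    have h4 : (j : ℕ) * (gradedPoly A a).natDegree ≤ j * D :=
      Nat.mul_le_mul_left _ (le_max_left _ _)
    have h5 : (p ^ e - j) * D + j * D = p ^ e * D := by
      rw [← add_mul, Nat.sub_add_cancel hj]
    exact Nat.le_of_mul_le_mul_left (by omega : p ^ e * _ ≤ p ^ e * D) hq0
  choose z hz using hz
  have hdep : ¬ LinearIndependent K z := fun h => by
    have := h.fintype_card_le_finrank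
    rw [Fintype.card_fin] at this
    omega
  obtain ⟨g, hg, i, hi⟩ := Fintype.not_linearIndependent_iff.1 hdep
  have hyalg : IsAlgebraic K y := by
    refine ⟨∑ j : Fin (p ^ e), Polynomial.monomial (j : ℕ) (g j), fun h => hi ?_, ?_⟩
    · have := congrArg (fun P => Polynomial.coeff P (i : ℕ)) h
      simpa [Polynomial.finsetSum_coeff, Polynomial.coeff_monomial, Fin.val_inj] using this
    · have h1 := congrArg (fun w : W => algebraMap R (FractionRing R) w) hg
      apply mul_left_cancel₀ hbL
      simp only [map_sum, Polynomial.aeval_monomial, Finset.mul_sum, mul_zero]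
      simp only [Submodule.coe_sum, Submodule.coe_smul, map_sum, Algebra.smul_def, map_mul, hz,
        ← IsScalarTower.algebraMap_apply, ZeroMemClass.coe_zero, map_zero] at h1
      rw [← h1]
      refine Finset.sum_congr rfl fun j _ => by ring
  have hxint : IsIntegral K (y ^ p ^ e) := hyalg.isIntegral.pow _
  obtain ⟨r, hr⟩ := IsIntegrallyClosed.isIntegral_iff.1 (hxint.tower_top (A := R))
  rw [← hr] at hxint
  obtain ⟨k, hk⟩ := mem_base_of_isIntegral A h0 r
    ((isIntegral_algebraMap_iff (IsFractionRing.injective R (FractionRing R))).1 hxint)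
  exact ⟨k, by rw [← hy, ← hr, ← hk, ← IsScalarTower.algebraMap_apply]⟩

theorem bracketPow_span {R : Type} [CommRing R] (p : ℕ) [ExpChar R p] (S : Set R) (e : ℕ) :
    bracketPow (Ideal.span S) (p ^ e) = Ideal.span ((fun a => a ^ p ^ e) '' S) :=
  Ideal.map_span (iterateFrobenius R p e) S

/-- The nontrivial inclusion. -/
theorem mem_of_mem_tightClosure (K : Type) [Field K]
    (p : ℕ) [Fact p.Prime] [CharP K p] [ExpChar K p] [PerfectRing K p]
    (R : Type) [CommRing R] [IsDomain R] [IsIntegrallyClosed R] [Algebra K R]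
    [Algebra.FiniteType K R]
    (A : ℕ → Submodule K R) [GradedAlgebra A]
    (h0 : A 0 = Submodule.span K {1})
    (M : ℕ) (I : Ideal R)
    (hI : ∃ S : Set R, (∀ g ∈ S, ∃ dg, M ≤ dg ∧ g ∈ A dg) ∧ I = Ideal.span S)
    (f : R) (hf : ∃ df, df ≤ M ∧ f ∈ A df)
    (hft : f ∈ tightClosure p I) : f ∈ I := by
  classical
  obtain ⟨c, hc, e₁, he₁⟩ := hft
  obtain ⟨S, hS, rfl⟩ := hI
  obtain ⟨m, hmM, hfm⟩ := hf
  have : CharP R p := charP_of_injective_algebraMap (algebraMap K R).injective p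
  have : CharP (FractionRing R) p :=
    charP_of_injective_algebraMap (algebraMap K (FractionRing R)).injective p
  obtain ⟨d, hd⟩ : ∃ d, (decompose A c d : R) ≠ 0 := by
    by_contra! h
    apply hc
    rw [← DirectSum.sum_support_decompose A c]
    exact Finset.sum_eq_zero fun i _ => h i
  have := finite_graded_piece A h0 d
  let w := Module.finBasis K (A d)
  have hw : LinearIndependent K fun j => algebraMap R (FractionRing R) (w j) :=
    (w.linearIndependent.map' (A d).subtype (Submodule.ker_subtype _)).map'
      (IsScalarTower.toAlgHom K R (FractionRing R)).toLinearMap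
      (LinearMap.ker_eq_bot.2 (IsFractionRing.injective R (FractionRing R)))
  obtain ⟨e₂, he₂⟩ := frob_indep (p := p) (mem_base_of_perfect A h0) _ hw
  let e := max (max e₁ e₂) d
  have hmem := he₁ e (le_trans (le_max_left _ _) (le_max_left _ _))
  have hind := he₂ e (le_trans (le_max_right _ _) (le_max_left _ _))
  have hdq : d < p ^ e := (le_max_right _ _).trans_lt (Nat.lt_pow_self (Fact.out : p.Prime).one_lt)
  have hqM : p ^ e * m ≤ p ^ e * M := Nat.mul_le_mul_left _ hmM
  rw [bracketPow_span] at hmem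
  let V : Submodule K R := Submodule.span K {s | s ∈ S ∧ s ∈ A m}
  have hroot : ∀ k : K, ∃ k', k' ^ p ^ e = k := fun k =>
    ⟨(iterateFrobeniusEquiv K p e).symm k, by
      rw [← iterateFrobenius_def, ← coe_iterateFrobeniusEquiv]
      exact (iterateFrobeniusEquiv K p e).apply_symm_apply k⟩
  -- an element of degree `d` times a `q`-th power, written in the basis `w`
  have hexp : ∀ r ∈ A d, ∃ k : Fin _ → K, ∀ s : R,
      r * s ^ p ^ e = ∑ j, (w j : R) * (k j • s) ^ p ^ e := by
    intro r hr
    choose k hk using fun j => hroot (w.repr ⟨r, hr⟩ j)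
    refine ⟨k, fun s => ?_⟩
    have h1 := congrArg (Subtype.val) (w.sum_repr ⟨r, hr⟩)
    simp only [Submodule.coe_sum, Submodule.coe_smul] at h1
    conv_lhs => rw [← h1, Finset.sum_mul]
    refine Finset.sum_congr rfl fun j _ => ?_
    rw [_root_.smul_pow, hk, smul_mul_assoc, mul_smul_comm]
  -- the degree `d + q * m` component of an element of `I^[q]` is a combination of the `w j` whose
  -- coefficients are `q`-th powers of elements of `V`
  have hT : ∀ x ∈ Ideal.span ((fun a => a ^ p ^ e) '' S), ∀ r : R, ∃ v : Fin _ → R,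
      (∀ j, v j ∈ V) ∧ (decompose A (r * x) (d + p ^ e * m) : R)
        = ∑ j, (w j : R) * v j ^ p ^ e := by
    intro x hx
    have hzero : ∃ v : Fin (Module.finrank K (A d)) → R,
      (∀ j, v j ∈ V) ∧ 0 = ∑ j, (w j : R) * v j ^ p ^ e :=
      ⟨0, fun _ => zero_mem _, by simp [(Fact.out : p.Prime).ne_zero]⟩
    induction hx using Submodule.span_induction with
    | mem t ht =>
      obtain ⟨s, hs, rfl⟩ := ht
      intro r
      obtain ⟨n, hMn, hn⟩ := hS s hs
      have hsn : s ^ p ^ e ∈ A (p ^ e * n) := by simpa using SetLike.pow_mem_graded (p ^ e) hn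
      change ∃ v : Fin _ → R, (∀ j, v j ∈ V) ∧ (decompose A (r * s ^ p ^ e) _ : R) = _
      rw [coe_decompose_mul_of_right_mem A _ hsn]
      split_ifs with h
      -- a generator of degree above `m` contributes nothing, as `d < q`
      · have hnm : n = m := by
          by_contra hne
          have : m + 1 ≤ n := by omega
          have := Nat.mul_le_mul_left (p ^ e) this
          rw [mul_add, mul_one] at this
          omega
        subst hnm
        obtain ⟨k, hk⟩ := hexp _ (SetLike.coe_mem (decompose A r d))
        refine ⟨fun j => k j • s, fun j => V.smul_mem _ (Submodule.subset_span ⟨hs, hn⟩), ?_⟩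
        rw [← hk, Nat.add_sub_cancel]
      · exact hzero
    | zero => intro r; simpa using hzero
    | add x y _ _ hx hy =>
      intro r
      obtain ⟨v, hv, h1⟩ := hx r
      obtain ⟨v', hv', h2⟩ := hy r
      refine ⟨v + v', fun j => add_mem (hv j) (hv' j), ?_⟩
      rw [mul_add, decompose_add, DirectSum.add_apply, Submodule.coe_add, h1, h2,
        ← Finset.sum_add_distrib]
      refine Finset.sum_congr rfl fun j _ => ?_
      rw [Pi.add_apply, add_pow_char_pow, mul_add]
    | smul a x _ hx => intro r; rw [smul_eq_mul, ← mul_assoc]; exact hx _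
  obtain ⟨v, hv, hsum⟩ := hT _ hmem 1
  have hfq : f ^ p ^ e ∈ A (p ^ e * m) := by simpa using SetLike.pow_mem_graded (p ^ e) hfm
  rw [one_mul, coe_decompose_mul_add_of_right_mem A hfq] at hsum
  obtain ⟨k, hk⟩ := hexp _ (SetLike.coe_mem (decompose A c d))
  have hkf : ∀ j, k j • f = v j := by
    have := hind (fun j => algebraMap R (FractionRing R) (k j • f - v j)) (by
      simp only [← map_pow, ← map_mul, ← map_sum]
      rw [map_eq_zero_iff _ (IsFractionRing.injective R (FractionRing R))]
      simp only [sub_pow_char_pow, mul_comm _ (w _ : R), mul_sub, Finset.sum_sub_distrib]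
      rw [← hk, hsum, sub_self])
    intro j
    have hj := congrFun this j
    rw [Pi.zero_apply, map_eq_zero_iff _ (IsFractionRing.injective R (FractionRing R))] at hj
    exact sub_eq_zero.1 hj
  obtain ⟨j, hj⟩ : ∃ j, k j ≠ 0 := by
    by_contra! h
    apply hd
    have := hk 1
    simpa [h, (Fact.out : p.Prime).ne_zero] using this
  have hfV : f ∈ V := by
    have := V.smul_mem (k j)⁻¹ (hkf j ▸ hv j)
    rwa [smul_smul, inv_mul_cancel₀ hj, one_smul] at this
  exact (Submodule.span_le.2 fun s hs => Ideal.subset_span hs.1 :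
    V ≤ (Ideal.span S).restrictScalars K) hfV

end Helpers

/-- **Smith's exclusion bound.** Let `R` be a normal ℕ-graded domain of
finite type over a perfect field `K = R_0` of characteristic `p > 0`. If `I` is an ideal
generated by homogeneous elements of degrees `≥ M` and `f` is homogeneous of degree `≤ M`,
then `f ∈ I^*` if and only if `f ∈ I`. -/
theorem statement15 (K : Type) [Field K]
    (p : ℕ) [Fact p.Prime] [CharP K p] [ExpChar K p] [PerfectRing K p]
    (R : Type) [CommRing R] [IsDomain R] [IsIntegrallyClosed R] [Algebra K R]
    [Algebra.FiniteType K R]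
    (A : ℕ → Submodule K R) [GradedAlgebra A]
    (h0 : A 0 = Submodule.span K {1})
    (M : ℕ) (I : Ideal R)
    (hI : ∃ S : Set R, (∀ g ∈ S, ∃ dg, M ≤ dg ∧ g ∈ A dg) ∧ I = Ideal.span S)
    (f : R) (hf : ∃ df, df ≤ M ∧ f ∈ A df) :
    f ∈ tightClosure p I ↔ f ∈ I := by
  refine ⟨mem_of_mem_tightClosure K p R A h0 M I hI f hf, fun h => ?_⟩
  exact ⟨1, one_ne_zero, 0, fun e _ => by
    rw [one_mul]; exact Ideal.subset_span ⟨f, h, rfl⟩⟩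
end
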